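/- arXiv:0906.1632 — 6 statements merged into one kernel-verified Lean document; each statement's English description precedes it below -/
import Mathlib

section
/- In the exponential case, for every Z ∈ L^∞_T the process (X̂_s(Z))_{s=t,…,T} defined by X̂_t(Z) = (β_t/α_t) V_t(Z) and X̂_s(Z) = (1/α_s){ β_t V_t(Z) + Σ_{r=t+1}^s β_r (V_r(Z) − V_{r−1}(Z)) } for s = t+1,…,T, is the unique (up to a.s. equality) maximizer of the essential supremum esssup_{(X_s)∈𝓐_{1,t}(Z)} Σ_{s=t}^T E[u_s(X_s) | 𝓕_t]. Moreover U_t(Z) = (1/β_t)(1 − exp(−β_t V_t(Z))) a.s. -/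
open MeasureTheory Filter

variable {Ω : Type*}

/-- `X ∈ L^∞(m)`: `m`-measurable and (essentially) bounded. -/
def MeasBdd (m : MeasurableSpace Ω) (X : Ω → ℝ) : Prop :=
  Measurable[m] X ∧ ∃ C : ℝ, ∀ ω, |X ω| ≤ C

/-- `u` is a utility function (strictly increasing, strictly concave, `C¹`) with
derivative `u'` satisfying `u 0 = 0`, `u' 0 = 1`, `u'(+∞) = 0`, `u'(-∞) = +∞`. -/
structure IsUtility (u u' : ℝ → ℝ) : Prop where
  strictMono : StrictMono u
  strictConcave : StrictConcaveOn ℝ Set.univ u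
  hasDeriv : ∀ x, HasDerivAt u (u' x) x
  derivCont : Continuous u'
  zero : u 0 = 0
  deriv_zero : u' 0 = 1
  deriv_top : Tendsto u' atTop (nhds 0)
  deriv_bot : Tendsto u' atBot atTop

/-- A one-product diversification of `Z` at time `t`: an adapted family `(X s)`,
`s = t,…,T`, of essentially bounded random variables summing to `Z`. -/
def IsDiv1 {m0 : MeasurableSpace Ω} (P : Measure Ω) (ℱ : Filtration ℕ m0)
    (t T : ℕ) (Z : Ω → ℝ) (X : ℕ → Ω → ℝ) : Prop :=
  (∀ s ∈ Finset.Icc t T, MeasBdd (ℱ s) (X s)) ∧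
  ∀ᵐ ω ∂P, (∑ s ∈ Finset.Icc t T, X s ω) = Z ω

/-- The total conditional expected utility `∑_{s=t}^T E[u_s(X_s) | 𝓕_t]`. -/
noncomputable def utilSum1 {m0 : MeasurableSpace Ω} (P : Measure Ω) (ℱ : Filtration ℕ m0)
    (u : ℕ → ℝ → ℝ) (t T : ℕ) (X : ℕ → Ω → ℝ) : Ω → ℝ :=
  fun ω => ∑ s ∈ Finset.Icc t T, (P[fun ω' => u s (X s ω') | ℱ t]) ω

namespace ExpDiv

theorem mb_const (m : MeasurableSpace Ω) (c : ℝ) : MeasBdd m (fun _ : Ω => c) :=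
  ⟨measurable_const, |c|, fun _ => le_rfl⟩

theorem mb_mono {m m' : MeasurableSpace Ω} (h : m ≤ m') {X : Ω → ℝ} (hX : MeasBdd m X) :
    MeasBdd m' X := ⟨hX.1.mono h le_rfl, hX.2⟩

theorem mb_add {m : MeasurableSpace Ω} {X Y : Ω → ℝ} (hX : MeasBdd m X) (hY : MeasBdd m Y) :
    MeasBdd m (fun ω => X ω + Y ω) := by
  obtain ⟨hX, C, hC⟩ := hX
  obtain ⟨hY, D, hD⟩ := hY
  exact ⟨hX.add hY, C + D, fun ω => (abs_add_le _ _).trans (add_le_add (hC ω) (hD ω))⟩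

theorem mb_mul {m : MeasurableSpace Ω} {X Y : Ω → ℝ} (hX : MeasBdd m X) (hY : MeasBdd m Y) :
    MeasBdd m (fun ω => X ω * Y ω) := by
  obtain ⟨hX, C, hC⟩ := hX
  obtain ⟨hY, D, hD⟩ := hY
  refine ⟨hX.mul hY, C * D, fun ω => ?_⟩
  rw [abs_mul]
  exact mul_le_mul (hC ω) (hD ω) (abs_nonneg _) ((abs_nonneg _).trans (hC ω))

theorem mb_sub {m : MeasurableSpace Ω} {X Y : Ω → ℝ} (hX : MeasBdd m X) (hY : MeasBdd m Y) :
    MeasBdd m (fun ω => X ω - Y ω) := by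
  have := mb_add hX (mb_mul (mb_const m (-1)) hY)
  convert this using 2
  ring

theorem mb_exp {m : MeasurableSpace Ω} {X : Ω → ℝ} (hX : MeasBdd m X) :
    MeasBdd m (fun ω => Real.exp (X ω)) := by
  obtain ⟨hX, C, hC⟩ := hX
  refine ⟨Real.measurable_exp.comp hX, Real.exp C, fun ω => ?_⟩
  rw [abs_of_pos (Real.exp_pos _)]
  exact Real.exp_le_exp.2 ((le_abs_self _).trans (hC ω))

theorem mb_sum {m : MeasurableSpace Ω} (S : Finset ℕ) {X : ℕ → Ω → ℝ}
    (hX : ∀ s ∈ S, MeasBdd m (X s)) : MeasBdd m (fun ω => ∑ s ∈ S, X s ω) := by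
  classical
  induction S using Finset.induction_on with
  | empty => simpa using mb_const m 0
  | insert a S ha ih =>
    simp only [Finset.sum_insert ha]
    exact mb_add (hX a (Finset.mem_insert_self _ _))
      (ih fun s hs => hX s (Finset.mem_insert_of_mem hs))

theorem mb_int {m m0 : MeasurableSpace Ω} (h : m ≤ m0) (P : Measure Ω) [IsProbabilityMeasure P]
    {X : Ω → ℝ} (hX : MeasBdd m X) : Integrable X P := by
  obtain ⟨hm, C, hC⟩ := hX
  exact Integrable.of_bound (hm.mono h le_rfl).aestronglyMeasurable C
    (Eventually.of_forall fun ω => by simpa using hC ω)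

/-- Positivity of the conditional expectation of the exponential of a bounded variable. -/
theorem ce_exp_pos {m m0 : MeasurableSpace Ω} (P : Measure Ω) [IsProbabilityMeasure P]
    (h : m ≤ m0) {X : Ω → ℝ} (hX : MeasBdd m0 X) :
    ∀ᵐ ω ∂P, 0 < (P[fun ω' => Real.exp (X ω') | m]) ω := by
  obtain ⟨C, hC⟩ := hX.2
  have h1 : (fun _ : Ω => Real.exp (-C)) ≤ᵐ[P] fun ω' => Real.exp (X ω') :=
    Eventually.of_forall fun ω => Real.exp_le_exp.2 (neg_le_of_abs_le (hC ω))
  have h2 := condExp_mono (m := m) (integrable_const _) (mb_int le_rfl P (mb_exp hX)) h1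
  rw [condExp_const h] at h2
  filter_upwards [h2] with ω hω
  exact (Real.exp_pos _).trans_le hω

theorem gap_nonneg {a : ℝ} (ha : 0 < a) (x y : ℝ) :
    0 ≤ a⁻¹ * (1 - Real.exp (-a * x)) + Real.exp (-a * x) * (y - x)
      - a⁻¹ * (1 - Real.exp (-a * y)) ∧
    (a⁻¹ * (1 - Real.exp (-a * x)) + Real.exp (-a * x) * (y - x)
      - a⁻¹ * (1 - Real.exp (-a * y)) = 0 → y = x) := by
  have e : a⁻¹ * (1 - Real.exp (-a * x)) + Real.exp (-a * x) * (y - x)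
      - a⁻¹ * (1 - Real.exp (-a * y))
      = a⁻¹ * Real.exp (-a * x) * (Real.exp (-a * (y - x)) - (-a * (y - x) + 1)) := by
    have : Real.exp (-a * y) = Real.exp (-a * x) * Real.exp (-a * (y - x)) := by
      rw [← Real.exp_add]; ring_nf
    rw [this]; field_simp; ring
  rw [e]
  have hp : 0 < a⁻¹ * Real.exp (-a * x) := by positivity
  refine ⟨mul_nonneg hp.le (sub_nonneg.2 (Real.add_one_le_exp _)), fun h => ?_⟩
  by_contra hne
  have h3 : -a * (y - x) ≠ 0 := mul_ne_zero (neg_ne_zero.2 ha.ne') (sub_ne_zero.2 hne)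
  have := mul_pos hp (sub_pos.2 (Real.add_one_lt_exp h3))
  exact this.ne' h

/-- Exchange of summation. -/
theorem sum_swap (a f : ℕ → ℝ) (t : ℕ) (c : ℝ) (T : ℕ) :
    ∑ s ∈ Finset.Icc t T, a s * (c + ∑ r ∈ Finset.Icc (t + 1) s, f r)
      = c * ∑ s ∈ Finset.Icc t T, a s
        + ∑ r ∈ Finset.Icc (t + 1) T, f r * ∑ s ∈ Finset.Icc r T, a s := by
  simp only [mul_add, Finset.sum_add_distrib, Finset.mul_sum]
  congr 1
  · exact Finset.sum_congr rfl fun _ _ => mul_comm _ _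
  · rw [Finset.sum_comm' (t' := Finset.Icc (t + 1) T) (s' := fun r => Finset.Icc r T)]
    · exact Finset.sum_congr rfl fun _ _ => Finset.sum_congr rfl fun _ _ => mul_comm _ _
    · intro x y
      simp only [Finset.mem_Icc]
      omega

theorem tele (v : ℕ → ℝ) (t T : ℕ) (h : t ≤ T) :
    ∑ r ∈ Finset.Icc (t + 1) T, (v r - v (r - 1)) = v T - v t := by
  induction T, h using Nat.le_induction with
  | base => simp
  | succ n hn ih =>
    rw [Finset.sum_Icc_succ_top (by omega), ih]
    simp

end ExpDiv

/-- Theorem 2.23: in the exponential case, the explicitly given process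
`(X̂_s(Z))` is the unique maximizer of the diversification problem, and
`U_t(Z) = (1/β_t)(1 − exp(−β_t V_t(Z)))` a.s. -/
theorem exponential_optimal_diversification
    {m0 : MeasurableSpace Ω} (P : Measure Ω) [IsProbabilityMeasure P]
    (ℱ : Filtration ℕ m0) (T t : ℕ) (hT : 0 < T) (ht : t ≤ T)
    (α : ℕ → ℝ) (hα : ∀ s, 0 < α s)
    -- exponential utilities:
    (u : ℕ → ℝ → ℝ) (hu : ∀ s, u s = fun x => (α s)⁻¹ * (1 - Real.exp (-(α s) * x)))
    -- modified risk aversion `1/β_r = Σ_{s=r}^T 1/α_s`: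
    (β : ℕ → ℝ) (hβpos : ∀ r, r ≤ T → 0 < β r)
    (hβ : ∀ r, r ≤ T → (β r)⁻¹ = ∑ s ∈ Finset.Icc r T, (α s)⁻¹)
    (Z : Ω → ℝ) (hZ : MeasBdd (ℱ T) Z)
    -- the adapted process `(V_r(Z))` defined by the backward iteration:
    (V : ℕ → Ω → ℝ) (hVadapted : ∀ r, r ≤ T → MeasBdd (ℱ r) (V r))
    (hVT : V T =ᵐ[P] Z)
    (hViter : ∀ r, r < T → V r =ᵐ[P] fun ω =>
      -(β (r + 1))⁻¹ *
        Real.log ((P[fun ω' => Real.exp (-(β (r + 1)) * V (r + 1) ω') | ℱ r]) ω)) :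
    -- `X̂` as in (2.16.5):
    ∀ Xhat : ℕ → Ω → ℝ,
      (∀ s ω, Xhat s ω = (α s)⁻¹ *
        (β t * V t ω + ∑ r ∈ Finset.Icc (t + 1) s, β r * (V r ω - V (r - 1) ω))) →
      -- `X̂` is a diversification of `Z` …
      IsDiv1 P ℱ t T Z Xhat ∧
      -- … attaining the essential supremum …
      (∀ Y : ℕ → Ω → ℝ, IsDiv1 P ℱ t T Z Y →
        utilSum1 P ℱ u t T Y ≤ᵐ[P] utilSum1 P ℱ u t T Xhat) ∧
      -- … uniquely so (up to a.s. equality):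
      (∀ X' : ℕ → Ω → ℝ, IsDiv1 P ℱ t T Z X' →
        (∀ Y : ℕ → Ω → ℝ, IsDiv1 P ℱ t T Z Y →
          utilSum1 P ℱ u t T Y ≤ᵐ[P] utilSum1 P ℱ u t T X') →
        ∀ s ∈ Finset.Icc t T, X' s =ᵐ[P] Xhat s) ∧
      -- and the value of `U_t(Z)`:
      utilSum1 P ℱ u t T Xhat =ᵐ[P]
        fun ω => (β t)⁻¹ * (1 - Real.exp (-(β t) * V t ω)) := by
  intro Xhat hX
  have hle : ∀ s, ℱ s ≤ m0 := fun s => ℱ.le s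
  set L : ℕ → Ω → ℝ := fun s ω =>
    β t * V t ω + ∑ r ∈ Finset.Icc (t + 1) s, β r * (V r ω - V (r - 1) ω) with hL
  set M : ℕ → Ω → ℝ := fun s ω => Real.exp (-L s ω) with hM
  have hLb : ∀ s, t ≤ s → s ≤ T → MeasBdd (ℱ s) (L s) := by
    intro s hts hsT
    have hV : ∀ r, r ≤ s → MeasBdd (ℱ s) (V r) := fun r hr =>
      ExpDiv.mb_mono (ℱ.mono hr) (hVadapted r (hr.trans hsT))
    refine ExpDiv.mb_add (ExpDiv.mb_mul (ExpDiv.mb_const _ _) (hV t hts))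
      (ExpDiv.mb_sum (X := fun r ω => β r * (V r ω - V (r - 1) ω)) _ fun r hr => ?_)
    rw [Finset.mem_Icc] at hr
    exact ExpDiv.mb_mul (ExpDiv.mb_const _ _) (ExpDiv.mb_sub (hV _ hr.2) (hV _ (by omega)))
  have hMb : ∀ s, t ≤ s → s ≤ T → MeasBdd (ℱ s) (M s) := by
    intro s h1 h2
    have := ExpDiv.mb_exp (ExpDiv.mb_mul (ExpDiv.mb_const (ℱ s) (-1)) (hLb s h1 h2))
    simpa [hM] using this
  have hMX : ∀ s ω, Real.exp (-(α s) * Xhat s ω) = M s ω := by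
    intro s ω
    have := (hα s).ne'
    simp only [hM, hL, hX]
    congr 1
    field_simp
  have hXb : ∀ s ∈ Finset.Icc t T, MeasBdd (ℱ s) (Xhat s) := by
    intro s hs
    rw [Finset.mem_Icc] at hs
    have := ExpDiv.mb_mul (ExpDiv.mb_const (ℱ s) (α s)⁻¹) (hLb s hs.1 hs.2)
    convert this using 2 with ω
    exact hX s ω
  have hdiv : IsDiv1 P ℱ t T Z Xhat := by
    refine ⟨hXb, ?_⟩
    filter_upwards [hVT] with ω hω
    simp only [hX]
    rw [ExpDiv.sum_swap (fun s => (α s)⁻¹) (fun r => β r * (V r ω - V (r - 1) ω)), ← hβ t ht]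
    have h1 : ∑ r ∈ Finset.Icc (t + 1) T,
        β r * (V r ω - V (r - 1) ω) * ∑ s ∈ Finset.Icc r T, (α s)⁻¹
        = ∑ r ∈ Finset.Icc (t + 1) T, (V r ω - V (r - 1) ω) := by
      refine Finset.sum_congr rfl fun r hr => ?_
      rw [Finset.mem_Icc] at hr
      rw [← hβ r hr.2]
      have := (hβpos r hr.2).ne'
      field_simp
    rw [h1, ExpDiv.tele (fun r => V r ω) t T ht, ← hω]
    have := (hβpos t ht).ne'
    field_simp
    ring
  -- martingale property
  have hstep : ∀ s, t ≤ s → s < T → P[M (s + 1) | ℱ s] =ᵐ[P] M s := by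
    intro s hts hsT
    set b := β (s + 1) with hb
    have hbpos : 0 < b := hβpos _ hsT
    have hVs := hVadapted s hsT.le
    have hVs1 := hVadapted (s + 1) hsT
    have hexpo : MeasBdd (ℱ (s + 1)) (fun ω => -b * V (s + 1) ω) :=
      ExpDiv.mb_mul (ExpDiv.mb_const _ _) hVs1
    have hAb : MeasBdd (ℱ s) (fun ω => M s ω * Real.exp (b * V s ω)) :=
      ExpDiv.mb_mul (hMb s hts hsT.le)
        (ExpDiv.mb_exp (ExpDiv.mb_mul (ExpDiv.mb_const _ _) hVs))
    have hEq : M (s + 1) = (fun ω => M s ω * Real.exp (b * V s ω)) *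
        (fun ω => Real.exp (-b * V (s + 1) ω)) := by
      funext ω
      simp only [hM, hL, Pi.mul_apply]
      rw [Finset.sum_Icc_succ_top (by omega), ← Real.exp_add, ← Real.exp_add]
      congr 1
      simp only [Nat.add_sub_cancel, ← hb]
      ring
    have hpull := condExp_mul_of_stronglyMeasurable_left (μ := P) (m := ℱ s)
      (f := fun ω => M s ω * Real.exp (b * V s ω))
      (g := fun ω => Real.exp (-b * V (s + 1) ω)) hAb.1.stronglyMeasurable
      (by
        rw [← hEq]
        exact ExpDiv.mb_int (hle _) P (hMb (s + 1) (by omega) hsT))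
      (ExpDiv.mb_int (hle _) P (ExpDiv.mb_exp hexpo))
    rw [← hEq] at hpull
    have hpos := ExpDiv.ce_exp_pos P (hle s) (ExpDiv.mb_mono (hle _) hexpo)
    filter_upwards [hpull, hpos, hViter s hsT] with ω h1 h2 h3
    rw [h1, Pi.mul_apply]
    have h4 : (P[fun ω' => Real.exp (-b * V (s + 1) ω') | ℱ s]) ω
        = Real.exp (-(b * V s ω)) := by
      rw [← hb] at h3
      have hb0 := hbpos.ne'
      have h5 : -(b * V s ω)
          = Real.log ((P[fun ω' => Real.exp (-b * V (s + 1) ω') | ℱ s]) ω) := by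
        rw [h3, neg_mul, mul_neg, neg_neg, mul_inv_cancel_left₀ hb0]
      rw [h5, Real.exp_log h2]
    rw [h4, mul_assoc, ← Real.exp_add]
    simp
  have hmart : ∀ s, s ≤ T → t ≤ s → P[M T | ℱ s] =ᵐ[P] M s := by
    intro s hs
    induction hs using Nat.decreasingInduction with
    | self =>
      intro h
      have hb := hMb T h le_rfl
      rw [condExp_of_stronglyMeasurable (hle T) hb.1.stronglyMeasurable
        (ExpDiv.mb_int (hle _) P hb)]
    | @of_succ s hsT ih =>
      intro h
      have h1 := condExp_condExp_of_le (μ := P) (f := M T) (ℱ.mono (Nat.le_succ s)) (hle (s + 1))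
      exact h1.symm.trans ((condExp_congr_ae (ih (by omega))).trans (hstep s h hsT))
  have hmart' : ∀ s, t ≤ s → s ≤ T → P[M s | ℱ t] =ᵐ[P] M t := by
    intro s h1 h2
    have h3 := condExp_condExp_of_le (μ := P) (f := M T) (ℱ.mono h1) (hle s)
    exact ((condExp_congr_ae (hmart s h2 h1)).symm.trans h3).trans (hmart t ht le_rfl)
  -- value
  have hval : utilSum1 P ℱ u t T Xhat =ᵐ[P]
        fun ω => (β t)⁻¹ * (1 - Real.exp (-(β t) * V t ω)) := by
    have h1 : ∀ s ∈ Finset.Icc t T, P[fun ω' => u s (Xhat s ω') | ℱ t] =ᵐ[P]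
        fun ω => (α s)⁻¹ * (1 - M t ω) := by
      intro s hs
      rw [Finset.mem_Icc] at hs
      have e : (fun ω' => u s (Xhat s ω')) = (α s)⁻¹ • ((fun _ => (1 : ℝ)) - M s) := by
        funext ω
        simp only [hu, hMX, Pi.smul_apply, Pi.sub_apply, smul_eq_mul]
      rw [e]
      have hMi := ExpDiv.mb_int (hle _) P (hMb s hs.1 hs.2)
      have h2 := condExp_smul (μ := P) (α s)⁻¹ ((fun _ => (1 : ℝ)) - M s) (ℱ t)
      have h3 := condExp_sub (μ := P) (integrable_const (1 : ℝ)) hMi (ℱ t)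
      rw [condExp_const (hle t)] at h3
      filter_upwards [h2, h3, hmart' s hs.1 hs.2] with ω h2 h3 h4
      rw [h2, Pi.smul_apply, h3, Pi.sub_apply, h4, smul_eq_mul]
    have h2 := (ae_ball_iff (Finset.Icc t T).countable_toSet).2 h1
    filter_upwards [h2] with ω h
    simp only [utilSum1]
    rw [Finset.sum_congr rfl h, ← Finset.sum_mul, ← hβ t ht]
    simp [hM, hL]
  -- gap
  set G : (ℕ → Ω → ℝ) → ℕ → Ω → ℝ := fun Y s ω =>
    (u s (Xhat s ω) + M s ω * (Y s ω - Xhat s ω)) - u s (Y s ω) with hG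
  have hub : ∀ s (m : MeasurableSpace Ω) (X : Ω → ℝ), MeasBdd m X →
      MeasBdd m (fun ω => u s (X ω)) := by
    intro s m X h
    simp only [hu]
    exact ExpDiv.mb_mul (ExpDiv.mb_const _ _) (ExpDiv.mb_sub (ExpDiv.mb_const _ _)
      (ExpDiv.mb_exp (ExpDiv.mb_mul (ExpDiv.mb_const _ _) h)))
  have hG0 : ∀ Y s ω, 0 ≤ G Y s ω ∧ (G Y s ω = 0 → Y s ω = Xhat s ω) := by
    intro Y s ω
    have := ExpDiv.gap_nonneg (hα s) (Xhat s ω) (Y s ω)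
    simpa only [hG, hu, hMX] using this
  have hGb : ∀ Y, IsDiv1 P ℱ t T Z Y → ∀ s ∈ Finset.Icc t T, MeasBdd m0 (G Y s) := by
    intro Y hY s hs
    have h1 := hXb s hs
    have h2 := hY.1 s hs
    have h3 := Finset.mem_Icc.1 hs
    exact ExpDiv.mb_mono (hle s) (ExpDiv.mb_sub (ExpDiv.mb_add (hub s _ _ h1)
      (ExpDiv.mb_mul (hMb s h3.1 h3.2) (ExpDiv.mb_sub h2 h1))) (hub s _ _ h2))
  have hGce : ∀ Y, IsDiv1 P ℱ t T Z Y → P[∑ s ∈ Finset.Icc t T, G Y s | ℱ t] =ᵐ[P]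
      fun ω => utilSum1 P ℱ u t T Xhat ω - utilSum1 P ℱ u t T Y ω := by
    intro Y hY
    have hDb : ∀ s ∈ Finset.Icc t T, MeasBdd (ℱ s) (fun ω => Y s ω - Xhat s ω) :=
      fun s hs => ExpDiv.mb_sub (hY.1 s hs) (hXb s hs)
    have hMT := hMb T ht le_rfl
    have hMTD : ∀ s ∈ Finset.Icc t T,
        Integrable (fun ω => M T ω * (Y s ω - Xhat s ω)) P := fun s hs =>
      ExpDiv.mb_int (hle T) P (ExpDiv.mb_mul hMT
        (ExpDiv.mb_mono (ℱ.mono (Finset.mem_Icc.1 hs).2) (hDb s hs)))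
    -- exchange `M s` for `M T`
    have hex : ∀ s ∈ Finset.Icc t T, P[fun ω => M s ω * (Y s ω - Xhat s ω) | ℱ t] =ᵐ[P]
        P[fun ω => M T ω * (Y s ω - Xhat s ω) | ℱ t] := by
      intro s hs
      have h3 := Finset.mem_Icc.1 hs
      have h4 := condExp_mul_of_stronglyMeasurable_right (μ := P) (m := ℱ s)
        (f := M T) (g := fun ω => Y s ω - Xhat s ω) (hDb s hs).1.stronglyMeasurable
        (hMTD s hs) (ExpDiv.mb_int (hle T) P hMT)
      have h5 : P[fun ω => M T ω * (Y s ω - Xhat s ω) | ℱ s] =ᵐ[P]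
          fun ω => M s ω * (Y s ω - Xhat s ω) := by
        refine EventuallyEq.trans h4 ?_
        filter_upwards [hmart s h3.2 h3.1] with ω h
        rw [Pi.mul_apply, h]
      exact (condExp_congr_ae h5).symm.trans (condExp_condExp_of_le (ℱ.mono h3.1) (hle s))
    have hzero : P[∑ s ∈ Finset.Icc t T, (fun ω => M T ω * (Y s ω - Xhat s ω)) | ℱ t]
        =ᵐ[P] 0 := by
      have h1 : (∑ s ∈ Finset.Icc t T, (fun ω => M T ω * (Y s ω - Xhat s ω))) =ᵐ[P]
          (0 : Ω → ℝ) := by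
        filter_upwards [hY.2, hdiv.2] with ω h1 h2
        rw [Finset.sum_apply, ← Finset.mul_sum, Finset.sum_sub_distrib, h1, h2]
        simp
      have h2 := condExp_congr_ae (m := ℱ t) h1
      rwa [condExp_zero] at h2
    have hsum0 := condExp_finsetSum hMTD (ℱ t)
    have hsumG := condExp_finsetSum
      (fun s hs => ExpDiv.mb_int le_rfl P (hGb Y hY s hs)) (ℱ t)
    have hGs : ∀ s ∈ Finset.Icc t T, P[G Y s | ℱ t] =ᵐ[P] fun ω =>
        (P[fun ω' => u s (Xhat s ω') | ℱ t]) ω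
          + (P[fun ω => M T ω * (Y s ω - Xhat s ω) | ℱ t]) ω
          - (P[fun ω' => u s (Y s ω') | ℱ t]) ω := by
      intro s hs
      have h3 := Finset.mem_Icc.1 hs
      have i1 := ExpDiv.mb_int (hle s) P (hub s _ _ (hXb s hs))
      have i2 := ExpDiv.mb_int (hle s) P (ExpDiv.mb_mul (hMb s h3.1 h3.2) (hDb s hs))
      have i3 := ExpDiv.mb_int (hle s) P (hub s _ _ (hY.1 s hs))
      have c1 := condExp_sub (i1.add i2) i3 (ℱ t)
      have c2 := condExp_add i1 i2 (ℱ t)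
      filter_upwards [c1, c2, hex s hs] with ω c1 c2 c3
      rw [Pi.sub_apply, c2, Pi.add_apply, c3] at c1
      exact c1
    have hGs' := (ae_ball_iff (Finset.Icc t T).countable_toSet).2 hGs
    filter_upwards [hGs', hsumG, hsum0, hzero] with ω h1 h2 h3 h4
    rw [h2, Finset.sum_apply, Finset.sum_congr rfl h1, Finset.sum_sub_distrib,
      Finset.sum_add_distrib]
    rw [h4, Finset.sum_apply] at h3
    rw [← h3]
    simp [utilSum1]
  have hGnn : ∀ Y, (0 : Ω → ℝ) ≤ ∑ s ∈ Finset.Icc t T, G Y s := by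
    intro Y ω
    rw [Finset.sum_apply]
    exact Finset.sum_nonneg fun s _ => (hG0 Y s ω).1
  refine ⟨hdiv, ?_, ?_, hval⟩
  · intro Y hY
    have h1 := condExp_nonneg (μ := P) (m := ℱ t) (Eventually.of_forall (hGnn Y))
    filter_upwards [h1, hGce Y hY] with ω h1 h2
    rw [h2] at h1
    simpa using h1
  · intro Y hY hmax s hs
    have h1 := condExp_nonneg (μ := P) (m := ℱ t) (Eventually.of_forall (hGnn Y))
    have h2 : P[∑ s ∈ Finset.Icc t T, G Y s | ℱ t] =ᵐ[P] 0 := by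
      filter_upwards [h1, hGce Y hY, hmax Xhat hdiv] with ω h1 h2 h3
      rw [h2] at h1 ⊢
      simp only [Pi.zero_apply] at h1 ⊢
      linarith
    have h3 : ∫ ω, (∑ s ∈ Finset.Icc t T, G Y s) ω ∂P = 0 := by
      rw [← integral_condExp (hle t), integral_congr_ae h2]
      simp
    have hint : Integrable (∑ s ∈ Finset.Icc t T, G Y s) P :=
      integrable_finsetSum' _ fun s hs => ExpDiv.mb_int le_rfl P (hGb Y hY s hs)
    have h4 := (integral_eq_zero_iff_of_nonneg (hGnn Y) hint).1 h3
    filter_upwards [h4] with ω h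
    rw [Finset.sum_apply, Pi.zero_apply,
      Finset.sum_eq_zero_iff_of_nonneg (fun s _ => (hG0 Y s ω).1)] at h
    exact (hG0 Y s ω).2 (h s hs)
end

section
/- In the exponential case, the indifference premium satisfies the backward recursion H_T(Z) = Z and H_t(Z) = (1/β_{t+1}) log E[ e^{β_{t+1} H_{t+1}(Z)} | 𝓕_t ] for t = 0,…,T−1, and admits the dual representation H_t(Z) = esssup_{(M_s)∈𝓜_t^0} { E[M_T Z | 𝓕_t] − Σ_{s=t}^T (1/α_s) E[M_s log M_s | 𝓕_t] } for t = 0,…,T, where 𝓜_t^0 is the set of positive martingales (M_s)_{s=t,…,T} with M_t = 1. -/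
open MeasureTheory Filter

variable {Ω : Type*}

/-- `g` is an essential supremum of the family `S` of random variables under `P`. -/
def IsEssSupOf {m0 : MeasurableSpace Ω} (P : Measure Ω) (S : Set (Ω → ℝ)) (g : Ω → ℝ) : Prop :=
  (∀ f ∈ S, f ≤ᵐ[P] g) ∧ ∀ h : Ω → ℝ, (∀ f ∈ S, f ≤ᵐ[P] h) → g ≤ᵐ[P] h

/-- `g` is an essential infimum of the family `S` of random variables under `P`. -/
def IsEssInfOf {m0 : MeasurableSpace Ω} (P : Measure Ω) (S : Set (Ω → ℝ)) (g : Ω → ℝ) : Prop :=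
  (∀ f ∈ S, g ≤ᵐ[P] f) ∧ ∀ h : Ω → ℝ, (∀ f ∈ S, h ≤ᵐ[P] f) → h ≤ᵐ[P] g

/-- `(M s)_{s=t,…,T} ∈ 𝓜_t^0`: positive integrable martingale with `M t = 1`
(and `M_s log M_s` integrable). -/
def IsPosMartOne {m0 : MeasurableSpace Ω} (P : Measure Ω) (ℱ : Filtration ℕ m0)
    (t T : ℕ) (M : ℕ → Ω → ℝ) : Prop :=
  (∀ s ∈ Finset.Icc t T,
    Measurable[ℱ s] (M s) ∧ Integrable (M s) P ∧ (∀ᵐ ω ∂P, 0 < M s ω) ∧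
      Integrable (fun ω => M s ω * Real.log (M s ω)) P) ∧
  (∀ r ∈ Finset.Icc t T, ∀ s ∈ Finset.Icc t T, r ≤ s →
    (P[M s | ℱ r]) =ᵐ[P] M r) ∧
  (∀ᵐ ω ∂P, M t ω = 1)

namespace ExpPrem

lemma MeasBdd.meas0 {m m0 : MeasurableSpace Ω} (hm : m ≤ m0) {X : Ω → ℝ} (h : MeasBdd m X) :
    Measurable[m0] X := h.1.mono hm le_rfl

lemma MeasBdd.mono {m m' : MeasurableSpace Ω} (hm : m ≤ m') {X : Ω → ℝ} (h : MeasBdd m X) :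
    MeasBdd m' X := ⟨h.1.mono hm le_rfl, h.2⟩

lemma MeasBdd.const (m : MeasurableSpace Ω) (c : ℝ) : MeasBdd m (fun _ : Ω => c) :=
  ⟨measurable_const, |c|, fun _ => le_rfl⟩

lemma MeasBdd.add {m : MeasurableSpace Ω} {X Y : Ω → ℝ} (hX : MeasBdd m X) (hY : MeasBdd m Y) :
    MeasBdd m (fun ω => X ω + Y ω) := by
  obtain ⟨h1, C, hC⟩ := hX
  obtain ⟨h2, D, hD⟩ := hY
  exact ⟨h1.add h2, C + D, fun ω => (abs_add_le _ _).trans (add_le_add (hC ω) (hD ω))⟩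

lemma MeasBdd.const_mul {m : MeasurableSpace Ω} {X : Ω → ℝ} (c : ℝ) (hX : MeasBdd m X) :
    MeasBdd m (fun ω => c * X ω) := by
  obtain ⟨h1, C, hC⟩ := hX
  refine ⟨h1.const_mul c, |c| * C, fun ω => ?_⟩
  rw [abs_mul]
  exact mul_le_mul_of_nonneg_left (hC ω) (abs_nonneg c)

lemma MeasBdd.sub {m : MeasurableSpace Ω} {X Y : Ω → ℝ} (hX : MeasBdd m X) (hY : MeasBdd m Y) :
    MeasBdd m (fun ω => X ω - Y ω) := by
  have := MeasBdd.add hX (MeasBdd.const_mul (-1) hY)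
  simpa [sub_eq_add_neg] using this

lemma MeasBdd.sum {m : MeasurableSpace Ω} {ι : Type*} (s : Finset ι) {X : ι → Ω → ℝ}
    (hX : ∀ i ∈ s, MeasBdd m (X i)) : MeasBdd m (fun ω => ∑ i ∈ s, X i ω) := by
  classical
  induction s using Finset.induction_on with
  | empty => simpa using MeasBdd.const m 0
  | insert a s ha ih =>
    simp only [Finset.sum_insert ha]
    exact MeasBdd.add (hX a (by simp)) (ih fun i hi => hX i (by simp [hi]))

lemma MeasBdd.exp {m : MeasurableSpace Ω} {X : Ω → ℝ} (hX : MeasBdd m X) :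
    MeasBdd m (fun ω => Real.exp (X ω)) := by
  obtain ⟨h1, C, hC⟩ := hX
  refine ⟨h1.exp, Real.exp C, fun ω => ?_⟩
  rw [abs_of_pos (Real.exp_pos _)]
  exact Real.exp_le_exp.2 ((le_abs_self _).trans (hC ω))

lemma MeasBdd.mul_integrable {m m0 : MeasurableSpace Ω} {P : Measure Ω} (hm : m ≤ m0)
    {M X : Ω → ℝ} (hX : MeasBdd m X) (hM : Integrable M P) :
    Integrable (fun ω => M ω * X ω) P := by
  obtain ⟨C, hC⟩ := hX.2
  exact hM.mul_bdd (c := C) (MeasBdd.meas0 hm hX).aestronglyMeasurable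
    (Eventually.of_forall fun ω => by simpa using hC ω)

lemma MeasBdd.integrable {m m0 : MeasurableSpace Ω} {P : Measure Ω} [IsProbabilityMeasure P]
    (hm : m ≤ m0) {X : Ω → ℝ} (hX : MeasBdd m X) : Integrable X P := by
  simpa using MeasBdd.mul_integrable hm hX (integrable_const (μ := P) (1:ℝ))

/-- one-step entropic operator -/
lemma step_exists {m m' m0 : MeasurableSpace Ω} (P : Measure Ω) [IsProbabilityMeasure P]
    (hm : m ≤ m0) (hm' : m' ≤ m0) {Y : Ω → ℝ} (hY : MeasBdd m' Y) (b : ℝ) (hb : 0 < b) :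
    ∃ Y', MeasBdd m Y' ∧
      P[fun ω => Real.exp (b * Y ω) | m] =ᵐ[P] fun ω => Real.exp (b * Y' ω) := by
  obtain ⟨C, hC⟩ := hY.2
  have hYi : Integrable (fun ω => Real.exp (b * Y ω)) P :=
    MeasBdd.integrable hm' (MeasBdd.exp (MeasBdd.const_mul b hY))
  set E := P[fun ω => Real.exp (b * Y ω) | m] with hE
  have hEm : Measurable[m] E := stronglyMeasurable_condExp.measurable
  refine ⟨fun ω => max (-C) (min C (b⁻¹ * Real.log (E ω))),
    ⟨measurable_const.max (measurable_const.min (hEm.log.const_mul _)), |C|, fun ω => ?_⟩, ?_⟩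
  · have := neg_abs_le C
    have := le_abs_self C
    have := neg_le_abs C
    refine abs_le.2 ⟨?_, ?_⟩
    · exact le_max_of_le_left (by linarith)
    · exact max_le (by linarith) ((min_le_left _ _).trans (by linarith))
  · have h1 : P[fun _ : Ω => Real.exp (b * (-C)) | m] ≤ᵐ[P] E :=
      condExp_mono (integrable_const _) hYi (Eventually.of_forall fun ω => by
        have := (abs_le.1 (hC ω)).1
        exact Real.exp_le_exp.2 (mul_le_mul_of_nonneg_left this hb.le))
    have h2 : E ≤ᵐ[P] P[fun _ : Ω => Real.exp (b * C) | m] :=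
      condExp_mono hYi (integrable_const _) (Eventually.of_forall fun ω => by
        have := (abs_le.1 (hC ω)).2
        exact Real.exp_le_exp.2 (mul_le_mul_of_nonneg_left this hb.le))
    rw [condExp_const hm] at h1 h2
    filter_upwards [h1, h2] with ω g1 g2
    have hpos : 0 < E ω := (Real.exp_pos _).trans_le g1
    have k1 := (Real.le_log_iff_exp_le hpos).2 g1
    have k2 := (Real.log_le_iff_le_exp hpos).2 g2
    have l1 : -C ≤ b⁻¹ * Real.log (E ω) := by
      rw [inv_mul_eq_div, le_div_iff₀ hb]; linarith
    have l2 : b⁻¹ * Real.log (E ω) ≤ C := by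
      rw [inv_mul_eq_div, div_le_iff₀ hb]; linarith
    rw [min_eq_right l2, max_eq_right l1, mul_inv_cancel_left₀ hb.ne', Real.exp_log hpos]

/-- the entropic backward recursion `G` -/
structure IsG {m0 : MeasurableSpace Ω} (P : Measure Ω) (ℱ : Filtration ℕ m0) (T : ℕ)
    (β : ℕ → ℝ) (t : ℕ) (G : ℕ → Ω → ℝ) : Prop where
  meas : ∀ s, t ≤ s → s ≤ T → MeasBdd (ℱ s) (G s)
  recu : ∀ s, t ≤ s → s < T → P[fun ω => Real.exp (β (s+1) * G (s+1) ω) | ℱ s] =ᵐ[P]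
    fun ω => Real.exp (β (s+1) * G s ω)

lemma IsG_exists {m0 : MeasurableSpace Ω} (P : Measure Ω) [IsProbabilityMeasure P]
    (ℱ : Filtration ℕ m0) (T : ℕ) (β : ℕ → ℝ) (hβpos : ∀ r, r ≤ T → 0 < β r)
    (Z : Ω → ℝ) (hZ : MeasBdd (ℱ T) Z) : ∃ G, IsG P ℱ T β 0 G ∧ G T = Z := by
  refine Nat.decreasingInduction (n := T) (motive := fun t _ => ∃ G, IsG P ℱ T β t G ∧ G T = Z)
    ?_ ?_ (Nat.zero_le T)
  · rintro k hk ⟨G, hG, hGT⟩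
    obtain ⟨Y, hY, hY2⟩ := step_exists P (ℱ.le k) (ℱ.le (k+1)) (hG.meas (k+1) le_rfl hk)
      (β (k+1)) (hβpos _ hk)
    refine ⟨Function.update G k Y, ⟨?_, ?_⟩, ?_⟩
    · intro s h1 h2
      rcases h1.eq_or_lt with rfl | h
      · simpa using hY
      · rw [Function.update_of_ne h.ne']; exact hG.meas s h h2
    · intro s h1 h2
      rcases h1.eq_or_lt with rfl | h
      · simpa using hY2
      · rw [Function.update_of_ne h.ne', Function.update_of_ne (by omega)]
        exact hG.recu s h h2
    · rw [Function.update_of_ne hk.ne', hGT]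
  · exact ⟨fun _ => Z, ⟨fun s h1 h2 => by
      obtain rfl : s = T := le_antisymm h2 h1
      exact hZ, fun s h1 h2 => by omega⟩, rfl⟩

lemma ce_mul {m m0 : MeasurableSpace Ω} (P : Measure Ω) (c : ℝ) (f : Ω → ℝ) :
    P[fun ω => c * f ω | m] =ᵐ[P] fun ω => c * (P[f | m]) ω :=
  condExp_smul c f m

lemma ce_aff {m m0 : MeasurableSpace Ω} (P : Measure Ω) [IsProbabilityMeasure P] (hm : m ≤ m0)
    (c : ℝ) (f : Ω → ℝ) (hf : Integrable f P) :
    P[fun ω => c * (1 - f ω) | m] =ᵐ[P] fun ω => c * (1 - (P[f | m]) ω) := by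
  refine (ce_mul P c (fun ω => 1 - f ω)).trans ?_
  have := condExp_sub (integrable_const (μ := P) (1:ℝ)) hf m
  rw [condExp_const hm] at this
  filter_upwards [this] with ω h
  have h' : (P[fun ω => 1 - f ω | m]) ω = 1 - (P[f | m]) ω := h
  rw [h']

lemma pair1 {m1 m2 m0 : MeasurableSpace Ω} (P : Measure Ω) [IsProbabilityMeasure P]
    (h12 : m1 ≤ m2) (h2 : m2 ≤ m0) {M N X : Ω → ℝ} (hM : Integrable M P)
    (hMN : P[M | m2] =ᵐ[P] N) (hX : MeasBdd m2 X) :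
    P[fun ω => M ω * X ω | m1] =ᵐ[P] P[fun ω => N ω * X ω | m1] := by
  have a := condExp_mul_of_stronglyMeasurable_right (μ := P) (m := m2) (f := M) (g := X)
    hX.1.stronglyMeasurable (MeasBdd.mul_integrable h2 hX hM) hM
  refine (condExp_condExp_of_le h12 h2).symm.trans (condExp_congr_ae ?_)
  filter_upwards [a, hMN] with ω h1 h2
  refine Eq.trans h1 ?_
  simp [h2]

lemma pair_sum {m0 : MeasurableSpace Ω} (P : Measure Ω) [IsProbabilityMeasure P]
    (ℱ : Filtration ℕ m0) (t T : ℕ) (M X : ℕ → Ω → ℝ) (hM : Integrable (M T) P)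
    (hMN : ∀ s ∈ Finset.Icc t T, P[M T | ℱ s] =ᵐ[P] M s)
    (hX : ∀ s ∈ Finset.Icc t T, MeasBdd (ℱ s) (X s)) :
    (fun ω => ∑ s ∈ Finset.Icc t T, (P[fun ω => M s ω * X s ω | ℱ t]) ω) =ᵐ[P]
      P[fun ω => M T ω * ∑ s ∈ Finset.Icc t T, X s ω | ℱ t] := by
  have h1 : ∀ᵐ ω ∂P, ∀ s ∈ Finset.Icc t T, (P[fun ω => M T ω * X s ω | ℱ t]) ω =
      (P[fun ω => M s ω * X s ω | ℱ t]) ω := by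
    rw [Finset.eventually_all]
    intro s hs
    exact pair1 P (ℱ.mono (Finset.mem_Icc.1 hs).1) (ℱ.le s) hM (hMN s hs) (hX s hs)
  have h2 := condExp_finsetSum (μ := P) (s := Finset.Icc t T)
    (f := fun s ω => M T ω * X s ω)
    (fun s hs => MeasBdd.mul_integrable (ℱ.le s) (hX s hs) hM) (ℱ t)
  have h3 : (∑ s ∈ Finset.Icc t T, fun ω => M T ω * X s ω) =
      fun ω => M T ω * ∑ s ∈ Finset.Icc t T, X s ω := by
    ext ω; simp [Finset.mul_sum]
  rw [h3] at h2
  filter_upwards [h1, h2] with ω g1 g2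
  rw [g2, Finset.sum_apply]
  exact Finset.sum_congr rfl fun s hs => (g1 s hs).symm

/-- The optimal log-density. -/
lemma opt_exists {m0 : MeasurableSpace Ω} (P : Measure Ω) [IsProbabilityMeasure P]
    (ℱ : Filtration ℕ m0) (T : ℕ) (α : ℕ → ℝ)
    (β : ℕ → ℝ) (hβpos : ∀ r, r ≤ T → 0 < β r)
    (hβ : ∀ r, r ≤ T → (β r)⁻¹ = ∑ s ∈ Finset.Icc r T, (α s)⁻¹)
    (t : ℕ) (ht : t ≤ T) (G : ℕ → Ω → ℝ) (hG : IsG P ℱ T β t G)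
    (K : Ω → ℝ) (hK : MeasBdd (ℱ t) K) :
    ∃ L : ℕ → Ω → ℝ, (∀ s ∈ Finset.Icc t T, MeasBdd (ℱ s) (L s)) ∧
      (∀ ω, L t ω = -(β t) * (K ω - G t ω)) ∧
      (∀ ω, ∑ s ∈ Finset.Icc t T, (α s)⁻¹ * L s ω = G T ω - K ω) ∧
      (∀ r ∈ Finset.Icc t T, ∀ s ∈ Finset.Icc t T, r ≤ s →
        P[fun ω => Real.exp (L s ω) | ℱ r] =ᵐ[P] fun ω => Real.exp (L r ω)) := by
  let L : ℕ → Ω → ℝ := fun s ω => -(β t) * (K ω - G t ω) +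
    ∑ r ∈ Finset.Ico t s, β (r+1) * (G (r+1) ω - G r ω)
  have hLm : ∀ s ∈ Finset.Icc t T, MeasBdd (ℱ s) (L s) := by
    intro s hs
    rw [Finset.mem_Icc] at hs
    refine MeasBdd.add (MeasBdd.const_mul _ (MeasBdd.sub (MeasBdd.mono (ℱ.mono hs.1) hK)
      (MeasBdd.mono (ℱ.mono hs.1) (hG.meas t le_rfl ht)))) (MeasBdd.sum _ fun r hr => ?_)
    rw [Finset.mem_Ico] at hr
    exact MeasBdd.const_mul _ (MeasBdd.sub
      (MeasBdd.mono (ℱ.mono (by omega)) (hG.meas (r+1) (by omega) (by omega)))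
      (MeasBdd.mono (ℱ.mono (by omega)) (hG.meas r (by omega) (by omega))))
  have hLs : ∀ s, t ≤ s → ∀ ω, L (s+1) ω = L s ω + β (s+1) * (G (s+1) ω - G s ω) := by
    intro s hs ω
    simp only [L]
    rw [Finset.sum_Ico_succ_top hs]; ring
  have hstep : ∀ s, t ≤ s → s < T →
      P[fun ω => Real.exp (L (s+1) ω) | ℱ s] =ᵐ[P] fun ω => Real.exp (L s ω) := by
    intro s h1 h2
    have hb : MeasBdd (ℱ s) (fun ω => Real.exp (L s ω - β (s+1) * G s ω)) :=
      MeasBdd.exp (MeasBdd.sub (hLm s (Finset.mem_Icc.2 ⟨h1, h2.le⟩))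
        (MeasBdd.const_mul _ (hG.meas s h1 h2.le)))
    have hc : Integrable (fun ω => Real.exp (β (s+1) * G (s+1) ω)) P :=
      MeasBdd.integrable (ℱ.le (s+1)) (MeasBdd.exp (MeasBdd.const_mul _
        (hG.meas (s+1) (by omega) h2)))
    have e : (fun ω => Real.exp (L (s+1) ω)) = (fun ω => Real.exp (β (s+1) * G (s+1) ω)) *
        (fun ω => Real.exp (L s ω - β (s+1) * G s ω)) := by
      ext ω
      simp only [Pi.mul_apply]
      rw [hLs s h1, ← Real.exp_add]; congr 1; ring
    rw [e]
    refine (condExp_mul_of_stronglyMeasurable_right hb.1.stronglyMeasurable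
      (MeasBdd.mul_integrable (ℱ.le s) hb hc) hc).trans ?_
    filter_upwards [hG.recu s h1 h2] with ω h
    rw [Pi.mul_apply, h, ← Real.exp_add]; congr 1; ring
  refine ⟨L, hLm, fun ω => by simp [L], fun ω => ?_, ?_⟩
  · simp only [L, mul_add, Finset.sum_add_distrib, ← Finset.sum_mul]
    rw [← hβ t ht]
    simp only [Finset.mul_sum]
    rw [Finset.sum_comm' (t' := Finset.Ico t T) (s' := fun r => Finset.Icc (r+1) T)
      (by intro x y; simp only [Finset.mem_Icc, Finset.mem_Ico]; omega)]
    have : ∀ r ∈ Finset.Ico t T, ∑ s ∈ Finset.Icc (r+1) T,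
        (α s)⁻¹ * (β (r+1) * (G (r+1) ω - G r ω)) = G (r+1) ω - G r ω := by
      intro r hr
      rw [Finset.mem_Ico] at hr
      rw [← Finset.sum_mul, ← hβ (r+1) hr.2, inv_mul_cancel_left₀ (hβpos _ hr.2).ne']
    rw [Finset.sum_congr rfl this, Finset.sum_Ico_sub (fun r => G r ω) ht]
    have := (hβpos t ht).ne'
    field_simp
    ring
  · intro r hr s hs hrs
    rw [Finset.mem_Icc] at hr hs
    induction s, hrs using Nat.le_induction with
    | base =>
      have := MeasBdd.exp (hLm r (Finset.mem_Icc.2 hr))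
      rw [condExp_of_stronglyMeasurable (ℱ.le r) this.1.stronglyMeasurable
        (MeasBdd.integrable (ℱ.le r) this)]
    | succ s hrs ih =>
      refine (condExp_condExp_of_le (ℱ.mono hrs) (ℱ.le s)).symm.trans ?_
      exact (condExp_congr_ae (hstep s (by omega) (by omega))).trans (ih (by omega))

lemma U_value {m0 : MeasurableSpace Ω} (P : Measure Ω) [IsProbabilityMeasure P]
    (ℱ : Filtration ℕ m0) (T : ℕ) (α : ℕ → ℝ) (hα : ∀ s, 0 < α s)
    (u : ℕ → ℝ → ℝ) (hu : ∀ s, u s = fun x => (α s)⁻¹ * (1 - Real.exp (-(α s) * x)))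
    (β : ℕ → ℝ) (hβpos : ∀ r, r ≤ T → 0 < β r)
    (hβ : ∀ r, r ≤ T → (β r)⁻¹ = ∑ s ∈ Finset.Icc r T, (α s)⁻¹)
    (t : ℕ) (ht : t ≤ T) (G : ℕ → Ω → ℝ) (hG : IsG P ℱ T β t G)
    (K : Ω → ℝ) (hK : MeasBdd (ℱ t) K) (V : Ω → ℝ)
    (hV : IsEssSupOf P
        {g | ∃ X : ℕ → Ω → ℝ, IsDiv1 P ℱ t T (fun ω => K ω - G T ω) X ∧
          g = utilSum1 P ℱ u t T X} V) :
    V =ᵐ[P] fun ω => (β t)⁻¹ * (1 - Real.exp (-(β t) * (K ω - G t ω))) := by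
  obtain ⟨L, hLm, hLt, hLsum, hLmart⟩ := opt_exists P ℱ T α β hβpos hβ t ht G hG K hK
  have htm : t ∈ Finset.Icc t T := Finset.mem_Icc.2 ⟨le_rfl, ht⟩
  have hTm : T ∈ Finset.Icc t T := Finset.mem_Icc.2 ⟨ht, le_rfl⟩
  have hMi : ∀ s ∈ Finset.Icc t T, Integrable (fun ω => Real.exp (L s ω)) P :=
    fun s hs => MeasBdd.integrable (ℱ.le s) (MeasBdd.exp (hLm s hs))
  -- value of the base terms
  have hval : ∀ᵐ ω ∂P, ∀ s ∈ Finset.Icc t T,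
      (P[fun ω => (α s)⁻¹ * (1 - Real.exp (L s ω)) | ℱ t]) ω =
        (α s)⁻¹ * (1 - Real.exp (-(β t) * (K ω - G t ω))) := by
    rw [Finset.eventually_all]
    intro s hs
    filter_upwards [ce_aff P (ℱ.le t) (α s)⁻¹ _ (hMi s hs),
      hLmart t htm s hs (Finset.mem_Icc.1 hs).1] with ω h1 h2
    rw [h1, h2, hLt]
  have hsum : ∀ ω, ∑ s ∈ Finset.Icc t T, (α s)⁻¹ * (1 - Real.exp (-(β t) * (K ω - G t ω))) =
      (β t)⁻¹ * (1 - Real.exp (-(β t) * (K ω - G t ω))) := by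
    intro ω; rw [← Finset.sum_mul, hβ t ht]
  have key1 : ∀ X : ℕ → Ω → ℝ, IsDiv1 P ℱ t T (fun ω => K ω - G T ω) X →
      utilSum1 P ℱ u t T X ≤ᵐ[P]
        fun ω => (β t)⁻¹ * (1 - Real.exp (-(β t) * (K ω - G t ω))) := by
    rintro X ⟨hX, hXs⟩
    have hDm : ∀ s ∈ Finset.Icc t T, MeasBdd (ℱ s) (fun ω => X s ω + (α s)⁻¹ * L s ω) :=
      fun s hs => MeasBdd.add (hX s hs) (MeasBdd.const_mul _ (hLm s hs))
    have hp := pair_sum P ℱ t T (fun s ω => Real.exp (L s ω))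
      (fun s ω => X s ω + (α s)⁻¹ * L s ω) (hMi T hTm)
      (fun s hs => hLmart s hs T hTm (Finset.mem_Icc.1 hs).2) hDm
    have hz : (fun ω => Real.exp (L T ω) * ∑ s ∈ Finset.Icc t T, (X s ω + (α s)⁻¹ * L s ω))
        =ᵐ[P] fun _ => (0:ℝ) := by
      filter_upwards [hXs] with ω h
      rw [Finset.sum_add_distrib, h, hLsum]; ring
    have hp2 := hp.trans (condExp_congr_ae hz)
    rw [condExp_const (ℱ.le t)] at hp2
    have hle : ∀ᵐ ω ∂P, ∀ s ∈ Finset.Icc t T, (P[fun ω => u s (X s ω) | ℱ t]) ω ≤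
        (P[fun ω => (α s)⁻¹ * (1 - Real.exp (L s ω)) | ℱ t]) ω +
        (P[fun ω => Real.exp (L s ω) * (X s ω + (α s)⁻¹ * L s ω) | ℱ t]) ω := by
      rw [Finset.eventually_all]
      intro s hs
      have i1 : Integrable (fun ω => u s (X s ω)) P := by
        rw [hu s]
        exact MeasBdd.integrable (ℱ.le s) (MeasBdd.const_mul _ (MeasBdd.sub (MeasBdd.const _ 1)
          (MeasBdd.exp (MeasBdd.const_mul _ (hX s hs)))))
      have i2 : Integrable (fun ω => (α s)⁻¹ * (1 - Real.exp (L s ω))) P :=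
        MeasBdd.integrable (ℱ.le s) (MeasBdd.const_mul _ (MeasBdd.sub (MeasBdd.const _ 1)
          (MeasBdd.exp (hLm s hs))))
      have i3 : Integrable (fun ω => Real.exp (L s ω) * (X s ω + (α s)⁻¹ * L s ω)) P :=
        MeasBdd.mul_integrable (ℱ.le s) (hDm s hs) (hMi s hs)
      have hmono := condExp_mono (m := ℱ t) i1 (i2.add i3) (Eventually.of_forall fun ω => by
        have ha := hα s
        simp only [hu s, Pi.add_apply]
        have hexp := Real.add_one_le_exp (-(α s) * X s ω - L s ω)
        have h1 : Real.exp (-(α s) * X s ω) =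
          Real.exp (L s ω) * Real.exp (-(α s) * X s ω - L s ω) := by
          rw [← Real.exp_add]; congr 1; ring
        have h2 := mul_le_mul_of_nonneg_left hexp (Real.exp_pos (L s ω)).le
        rw [← h1] at h2
        have h3 := mul_le_mul_of_nonneg_left h2 (inv_pos.2 ha).le
        have h4 : (α s)⁻¹ * (Real.exp (L s ω) * (-(α s) * X s ω - L s ω + 1)) =
          (α s)⁻¹ * Real.exp (L s ω) - Real.exp (L s ω) * (X s ω + (α s)⁻¹ * L s ω) := by
          field_simp
          ring
        rw [h4] at h3
        linarith)
      filter_upwards [hmono, condExp_add i2 i3 (ℱ t)] with ω h1 h2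
      rw [h2] at h1
      exact h1
    filter_upwards [hle, hp2, hval] with ω h1 h2 h3
    have := Finset.sum_le_sum h1
    rw [Finset.sum_add_distrib, h2, Finset.sum_congr rfl h3, hsum] at this
    simpa [utilSum1] using this
  have key2 : ∃ X : ℕ → Ω → ℝ, IsDiv1 P ℱ t T (fun ω => K ω - G T ω) X ∧
      utilSum1 P ℱ u t T X =ᵐ[P]
        fun ω => (β t)⁻¹ * (1 - Real.exp (-(β t) * (K ω - G t ω))) := by
    refine ⟨fun s ω => -(α s)⁻¹ * L s ω, ⟨fun s hs => MeasBdd.const_mul _ (hLm s hs),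
      Eventually.of_forall fun ω => ?_⟩, ?_⟩
    · have := hLsum ω
      simp only [neg_mul, Finset.sum_neg_distrib]
      linarith
    · filter_upwards [hval] with ω h
      rw [← hsum, ← Finset.sum_congr rfl h]
      unfold utilSum1
      refine Finset.sum_congr rfl fun s hs => ?_
      have : (fun ω' => u s (-(α s)⁻¹ * L s ω')) =
          fun ω => (α s)⁻¹ * (1 - Real.exp (L s ω)) := by
        ext ω'
        rw [hu s]
        have ha := (hα s).ne'
        have : -α s * (-(α s)⁻¹ * L s ω') = L s ω' := by field_simp
        simp only [this]
      rw [this]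
  refine EventuallyLE.antisymm (hV.2 _ ?_) ?_
  · rintro f ⟨X, hX, rfl⟩
    exact key1 X hX
  · obtain ⟨X, hX, hX2⟩ := key2
    exact hX2.symm.le.trans (hV.1 _ ⟨X, hX, rfl⟩)

lemma dual_rep {m0 : MeasurableSpace Ω} (P : Measure Ω) [IsProbabilityMeasure P]
    (ℱ : Filtration ℕ m0) (T : ℕ) (α : ℕ → ℝ) (hα : ∀ s, 0 < α s)
    (β : ℕ → ℝ) (hβpos : ∀ r, r ≤ T → 0 < β r)
    (hβ : ∀ r, r ≤ T → (β r)⁻¹ = ∑ s ∈ Finset.Icc r T, (α s)⁻¹)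
    (t : ℕ) (ht : t ≤ T) (G : ℕ → Ω → ℝ) (hG : IsG P ℱ T β t G)
    (V : Ω → ℝ) (hV : V =ᵐ[P] G t) :
      IsEssSupOf P
        {g | ∃ M : ℕ → Ω → ℝ, IsPosMartOne P ℱ t T M ∧
          g = fun ω => (P[fun ω' => M T ω' * G T ω' | ℱ t]) ω -
            ∑ s ∈ Finset.Icc t T,
              (α s)⁻¹ * (P[fun ω' => M s ω' * Real.log (M s ω') | ℱ t]) ω}
        V := by
  have hGt := hG.meas t le_rfl ht
  have hGT := hG.meas T ht le_rfl
  obtain ⟨L, hLm, hLt, hLsum, hLmart⟩ := opt_exists P ℱ T α β hβpos hβ t ht G hG (G t) hGt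
  have hLt0 : ∀ ω, L t ω = 0 := fun ω => by rw [hLt]; ring
  have htm : t ∈ Finset.Icc t T := Finset.mem_Icc.2 ⟨le_rfl, ht⟩
  have hTm : T ∈ Finset.Icc t T := Finset.mem_Icc.2 ⟨ht, le_rfl⟩
  have hMi : ∀ s ∈ Finset.Icc t T, Integrable (fun ω => Real.exp (L s ω)) P :=
    fun s hs => MeasBdd.integrable (ℱ.le s) (MeasBdd.exp (hLm s hs))
  have hpair : ∀ M, IsPosMartOne P ℱ t T M →
      (fun ω => ∑ s ∈ Finset.Icc t T, (α s)⁻¹ * (P[fun ω' => M s ω' * L s ω' | ℱ t]) ω) =ᵐ[P]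
        fun ω => (P[fun ω' => M T ω' * G T ω' | ℱ t]) ω - G t ω := by
    rintro M ⟨hM1, hM2, hM3⟩
    have hMT := (hM1 T hTm).2.1
    have hp := pair_sum P ℱ t T M (fun s ω => (α s)⁻¹ * L s ω) hMT
      (fun s hs => hM2 s hs T hTm (Finset.mem_Icc.1 hs).2)
      (fun s hs => MeasBdd.const_mul _ (hLm s hs))
    simp only [hLsum] at hp
    have hc : ∀ᵐ ω ∂P, ∀ s ∈ Finset.Icc t T,
        (P[fun ω' => M s ω' * ((α s)⁻¹ * L s ω') | ℱ t]) ω =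
          (α s)⁻¹ * (P[fun ω' => M s ω' * L s ω' | ℱ t]) ω := by
      rw [Finset.eventually_all]
      intro s hs
      have : (fun ω' => M s ω' * ((α s)⁻¹ * L s ω')) =
        fun ω' => (α s)⁻¹ * (M s ω' * L s ω') := by ext; ring
      rw [this]
      exact ce_mul P _ _
    have i1 := MeasBdd.mul_integrable (ℱ.le T) hGT hMT
    have i2 := MeasBdd.mul_integrable (ℱ.le t) hGt hMT
    have hs := condExp_sub i1 i2 (ℱ t)
    have e : ((fun ω => M T ω * G T ω) - fun ω => M T ω * G t ω) =
      fun ω => M T ω * (G T ω - G t ω) := by ext; simp; ring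
    rw [e] at hs
    have hq := condExp_mul_of_stronglyMeasurable_right (μ := P) (m := ℱ t) (f := M T) (g := G t)
      hGt.1.stronglyMeasurable i2 hMT
    filter_upwards [hp, hc, hs, hq, hM2 t htm T hTm ht, hM3] with ω h1 h2 h3 h4 h5 h6
    rw [← Finset.sum_congr rfl h2, h1, h3, Pi.sub_apply]
    have h4' : (P[fun ω => M T ω * G t ω | ℱ t]) ω = (P[M T | ℱ t]) ω * G t ω := h4
    rw [h4', h5, h6, one_mul]
  constructor
  · rintro f ⟨M, hM, rfl⟩
    have hp := hpair M hM
    obtain ⟨hM1, hM2, hM3⟩ := hM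
    have hle : ∀ᵐ ω ∂P, ∀ s ∈ Finset.Icc t T,
        (P[fun ω' => M s ω' * L s ω' | ℱ t]) ω ≤
          (P[fun ω' => M s ω' * Real.log (M s ω') | ℱ t]) ω := by
      rw [Finset.eventually_all]
      intro s hs
      obtain ⟨_, j1, j2, j3⟩ := hM1 s hs
      have j4 := MeasBdd.mul_integrable (ℱ.le s) (hLm s hs) j1
      have hmono := condExp_mono (m := ℱ t) j4 (j3.add ((hMi s hs).sub j1)) (by
        filter_upwards [j2] with ω hω
        simp only [Pi.add_apply, Pi.sub_apply]
        have hexp := Real.add_one_le_exp (L s ω - Real.log (M s ω))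
        rw [Real.exp_sub, Real.exp_log hω, le_div_iff₀ hω] at hexp
        linarith)
      filter_upwards [hmono, condExp_add j3 ((hMi s hs).sub j1) (ℱ t),
        condExp_sub (hMi s hs) j1 (ℱ t), hLmart t htm s hs (Finset.mem_Icc.1 hs).1,
        hM2 t htm s hs (Finset.mem_Icc.1 hs).1, hM3] with ω h1 h2 h3 h4 h5 h6
      rw [h2, Pi.add_apply, h3, Pi.sub_apply, h4, h5, h6, hLt0, Real.exp_zero] at h1
      linarith
    filter_upwards [hp, hle, hV] with ω h1 h2 h3
    have := Finset.sum_le_sum fun s hs =>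
      mul_le_mul_of_nonneg_left (h2 s hs) (inv_pos.2 (hα s)).le
    rw [h1] at this
    rw [h3]
    linarith
  · intro h hh
    have hM : IsPosMartOne P ℱ t T (fun s ω => Real.exp (L s ω)) := by
      refine ⟨fun s hs => ⟨(hLm s hs).1.exp, hMi s hs,
        Eventually.of_forall fun ω => Real.exp_pos _, ?_⟩, hLmart,
        Eventually.of_forall fun ω => by simp [hLt0]⟩
      simp only [Real.log_exp]
      exact MeasBdd.mul_integrable (ℱ.le s) (hLm s hs) (hMi s hs)
    have hp := hpair _ hM
    have := hh _ ⟨_, hM, rfl⟩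
    simp only [Real.log_exp] at this
    filter_upwards [this, hp, hV] with ω h1 h2 h3
    rw [h2] at h1
    rw [h3]
    linarith

end ExpPrem

open ExpPrem
/-- Theorem 2.24, first part: in the exponential case, the indifference
premium satisfies the backward recursion and the entropic dual representation. -/
theorem exponential_premium_recursion_and_dual
    {m0 : MeasurableSpace Ω} (P : Measure Ω) [IsProbabilityMeasure P]
    (ℱ : Filtration ℕ m0) (T : ℕ) (hT : 0 < T)
    (α : ℕ → ℝ) (hα : ∀ s, 0 < α s)
    (u : ℕ → ℝ → ℝ) (hu : ∀ s, u s = fun x => (α s)⁻¹ * (1 - Real.exp (-(α s) * x)))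
    (β : ℕ → ℝ) (hβpos : ∀ r, r ≤ T → 0 < β r)
    (hβ : ∀ r, r ≤ T → (β r)⁻¹ = ∑ s ∈ Finset.Icc r T, (α s)⁻¹)
    (U : ℕ → (Ω → ℝ) → Ω → ℝ)
    (hU : ∀ t, t ≤ T → ∀ W : Ω → ℝ, MeasBdd (ℱ T) W →
      IsEssSupOf P
        {g | ∃ X : ℕ → Ω → ℝ, IsDiv1 P ℱ t T W X ∧ g = utilSum1 P ℱ u t T X}
        (U t W))
    (H : ℕ → (Ω → ℝ) → Ω → ℝ)
    (hH : ∀ t, t ≤ T → ∀ W : Ω → ℝ, MeasBdd (ℱ T) W →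
      IsEssInfOf P
        {K | MeasBdd (ℱ t) K ∧ U t (fun _ => 0) ≤ᵐ[P] U t (fun ω => K ω - W ω)}
        (H t W))
    (Z : Ω → ℝ) (hZ : MeasBdd (ℱ T) Z) :
    -- terminal condition:
    (H T Z =ᵐ[P] Z) ∧
    -- backward recursion:
    (∀ t, t < T → H t Z =ᵐ[P] fun ω =>
      (β (t + 1))⁻¹ *
        Real.log ((P[fun ω' => Real.exp (β (t + 1) * H (t + 1) Z ω') | ℱ t]) ω)) ∧
    -- dual (entropic) representation:
    ∀ t, t ≤ T →
      IsEssSupOf P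
        {g | ∃ M : ℕ → Ω → ℝ, IsPosMartOne P ℱ t T M ∧
          g = fun ω => (P[fun ω' => M T ω' * Z ω' | ℱ t]) ω -
            ∑ s ∈ Finset.Icc t T,
              (α s)⁻¹ * (P[fun ω' => M s ω' * Real.log (M s ω') | ℱ t]) ω}
        (H t Z) := by
  obtain ⟨G, hG0, hGT⟩ := IsG_exists P ℱ T β hβpos Z hZ
  have hGt : ∀ t, IsG P ℱ T β t G := fun t =>
    ⟨fun s _ h2 => hG0.meas s (Nat.zero_le s) h2, fun s _ h2 => hG0.recu s (Nat.zero_le s) h2⟩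
  have hz : ∀ t, IsG P ℱ T β t (fun _ _ => (0:ℝ)) := fun t =>
    ⟨fun s _ _ => MeasBdd.const _ 0, fun s _ _ => by simp [condExp_const (ℱ.le s)]⟩
  have hHG : ∀ t, t ≤ T → H t Z =ᵐ[P] G t := by
    intro t ht
    have hU0 : U t (fun _ => 0) =ᵐ[P] fun _ => 0 := by
      have := U_value P ℱ T α hα u hu β hβpos hβ t ht (fun _ _ => (0:ℝ)) (hz t) (fun _ => 0)
        (MeasBdd.const _ 0) (U t (fun _ => 0)) (by
          simpa using hU t ht (fun _ => 0) (MeasBdd.const _ 0))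
      simpa using this
    have hUK : ∀ K, MeasBdd (ℱ t) K → U t (fun ω => K ω - Z ω) =ᵐ[P]
        fun ω => (β t)⁻¹ * (1 - Real.exp (-(β t) * (K ω - G t ω))) := by
      intro K hK
      refine U_value P ℱ T α hα u hu β hβpos hβ t ht G (hGt t) K hK _ ?_
      rw [hGT]
      exact hU t ht _ (MeasBdd.sub (MeasBdd.mono (ℱ.mono ht) hK) hZ)
    have hGm := hG0.meas t (Nat.zero_le t) ht
    have hb := hβpos t ht
    obtain ⟨hH1, hH2⟩ := hH t ht Z hZ
    refine EventuallyLE.antisymm (hH1 _ ⟨hGm, ?_⟩) (hH2 _ ?_)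
    · filter_upwards [hU0, hUK _ hGm] with ω h1 h2
      rw [h1, h2]; simp
    · rintro K ⟨hK, hKU⟩
      filter_upwards [hU0, hUK _ hK, hKU] with ω h1 h2 h3
      rw [h1, h2] at h3
      have h4 := nonneg_of_mul_nonneg_right h3 (inv_pos.2 hb)
      have h5 : Real.exp (-(β t) * (K ω - G t ω)) ≤ 1 := by linarith
      rw [Real.exp_le_one_iff] at h5
      nlinarith
  refine ⟨hGT ▸ hHG T le_rfl, fun t ht => ?_, fun t ht => ?_⟩
  · have hc : P[fun ω' => Real.exp (β (t + 1) * H (t + 1) Z ω') | ℱ t] =ᵐ[P]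
        P[fun ω' => Real.exp (β (t + 1) * G (t + 1) ω') | ℱ t] := by
      apply condExp_congr_ae
      filter_upwards [hHG (t+1) ht] with ω h
      rw [h]
    filter_upwards [hc, hG0.recu t (Nat.zero_le t) ht, hHG t ht.le] with ω h1 h2 h3
    rw [h1, h2, h3, Real.log_exp, inv_mul_cancel_left₀ (hβpos _ ht).ne']
  · have := dual_rep P ℱ T α hα β hβpos hβ t ht G (hGt t) (H t Z) (hHG t ht)
    rw [hGT] at this
    exact this
end

section
/- In the exponential case, the indifference premium satisfies the dynamic programming property H_t(Z) = H_t(H_{t+τ}(Z)) a.s. for all Z ∈ L^∞_T, t = 0,…,T−τ and τ = 1,…,T. -/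
open MeasureTheory Filter

variable {Ω : Type*}

section Helpers

/-- exponential utility with parameter `c`. -/
noncomputable def expV (c x : ℝ) : ℝ := c⁻¹ * (1 - Real.exp (-c * x))

lemma expV_nonneg_iff {c : ℝ} (hc : 0 < c) (x : ℝ) : 0 ≤ expV c x ↔ 0 ≤ x := by
  unfold expV
  rw [mul_nonneg_iff_of_pos_left (inv_pos.mpr hc), sub_nonneg, Real.exp_le_one_iff]
  constructor
  · intro h; by_contra hx; push Not at hx; nlinarith
  · intro h; nlinarith

lemma expV_conv_le {a b c : ℝ} (ha : 0 < a) (hb : 0 < b) (hc : 0 < c)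
    (h : c⁻¹ = a⁻¹ + b⁻¹) (x y : ℝ) : expV a x + expV b y ≤ expV c (x + y) := by
  have hw : c * a⁻¹ + c * b⁻¹ = 1 := by rw [← mul_add, ← h]; field_simp
  have hj := convexOn_exp.2 (Set.mem_univ (-a * x)) (Set.mem_univ (-b * y))
    (by positivity : 0 ≤ c * a⁻¹) (by positivity : 0 ≤ c * b⁻¹) hw
  simp only [smul_eq_mul] at hj
  have e : c * a⁻¹ * (-a * x) + c * b⁻¹ * (-b * y) = -c * (x + y) := by field_simp; ring
  rw [e] at hj
  have h2 := mul_le_mul_of_nonneg_left hj (inv_pos.mpr hc).le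
  have e2 : c⁻¹ * (c * a⁻¹ * Real.exp (-a * x) + c * b⁻¹ * Real.exp (-b * y))
      = a⁻¹ * Real.exp (-a * x) + b⁻¹ * Real.exp (-b * y) := by field_simp
  rw [e2] at h2
  unfold expV
  rw [h] at h2 ⊢
  linarith

lemma expV_conv_eq {a b c : ℝ} (ha : 0 < a) (hb : 0 < b) (hc : 0 < c)
    (h : c⁻¹ = a⁻¹ + b⁻¹) (r : ℝ) :
    expV a (c * a⁻¹ * r) + expV b (r - c * a⁻¹ * r) = expV c r := by
  have hw : c * a⁻¹ + c * b⁻¹ = 1 := by rw [← mul_add, ← h]; field_simp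
  have e1 : r - c * a⁻¹ * r = c * b⁻¹ * r := by linear_combination (-r) * hw
  have e2 : -a * (c * a⁻¹ * r) = -c * r := by field_simp
  have e3 : -b * (c * b⁻¹ * r) = -c * r := by field_simp
  unfold expV
  rw [e1, e2, e3, h]; ring

lemma MeasBdd.mono {m m' : MeasurableSpace Ω} (h : m ≤ m') {X : Ω → ℝ} (hX : MeasBdd m X) :
    MeasBdd m' X := ⟨hX.1.mono h le_rfl, hX.2⟩

lemma MeasBdd.add {m : MeasurableSpace Ω} {X Y : Ω → ℝ} (hX : MeasBdd m X) (hY : MeasBdd m Y) :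
    MeasBdd m (fun ω => X ω + Y ω) := by
  obtain ⟨hX, C, hC⟩ := hX
  obtain ⟨hY, D, hD⟩ := hY
  exact ⟨hX.add hY, C + D, fun ω => (abs_add_le _ _).trans (add_le_add (hC ω) (hD ω))⟩

lemma MeasBdd.const_mul {m : MeasurableSpace Ω} {X : Ω → ℝ} (hX : MeasBdd m X) (c : ℝ) :
    MeasBdd m (fun ω => c * X ω) := by
  obtain ⟨hX, C, hC⟩ := hX
  exact ⟨hX.const_mul c, |c| * C, fun ω => by
    rw [abs_mul]; exact mul_le_mul_of_nonneg_left (hC ω) (abs_nonneg c)⟩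

lemma MeasBdd.neg {m : MeasurableSpace Ω} {X : Ω → ℝ} (hX : MeasBdd m X) :
    MeasBdd m (fun ω => - X ω) := by
  obtain ⟨hX, C, hC⟩ := hX
  exact ⟨hX.neg, C, fun ω => by rw [abs_neg]; exact hC ω⟩

lemma MeasBdd.sub {m : MeasurableSpace Ω} {X Y : Ω → ℝ} (hX : MeasBdd m X) (hY : MeasBdd m Y) :
    MeasBdd m (fun ω => X ω - Y ω) := by
  simpa [sub_eq_add_neg] using hX.add hY.neg

lemma MeasBdd.mul {m : MeasurableSpace Ω} {X Y : Ω → ℝ} (hX : MeasBdd m X) (hY : MeasBdd m Y) :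
    MeasBdd m (fun ω => X ω * Y ω) := by
  obtain ⟨hX, C, hC⟩ := hX
  obtain ⟨hY, D, hD⟩ := hY
  exact ⟨hX.mul hY, C * D, fun ω => by
    rw [abs_mul]
    exact mul_le_mul (hC ω) (hD ω) (abs_nonneg _) ((abs_nonneg _).trans (hC ω))⟩

lemma MeasBdd.exp {m : MeasurableSpace Ω} {X : Ω → ℝ} (hX : MeasBdd m X) :
    MeasBdd m (fun ω => Real.exp (X ω)) := by
  obtain ⟨hX, C, hC⟩ := hX
  exact ⟨hX.exp, Real.exp C, fun ω => by
    rw [Real.abs_exp]; exact Real.exp_le_exp.mpr ((le_abs_self _).trans (hC ω))⟩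

lemma measBdd_const {m : MeasurableSpace Ω} (c : ℝ) : MeasBdd m (fun _ : Ω => c) :=
  ⟨measurable_const, |c|, fun _ => le_rfl⟩

lemma MeasBdd.expV {m : MeasurableSpace Ω} {X : Ω → ℝ} (hX : MeasBdd m X) (c : ℝ) :
    MeasBdd m (fun ω => expV c (X ω)) :=
  ((measBdd_const 1).sub (hX.const_mul (-c)).exp).const_mul c⁻¹

lemma MeasBdd.integrable {m m0 : MeasurableSpace Ω} (P : Measure Ω) [IsProbabilityMeasure P]
    (h : m ≤ m0) {X : Ω → ℝ} (hX : MeasBdd m X) : Integrable X P := by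
  obtain ⟨hX, C, hC⟩ := hX
  exact Integrable.of_bound (hX.mono h le_rfl).aestronglyMeasurable C
    (Eventually.of_forall fun ω => hC ω)

lemma MeasBdd.condExp_eq {m m0 : MeasurableSpace Ω} (P : Measure Ω) [IsProbabilityMeasure P]
    (h : m ≤ m0) {X : Ω → ℝ} (hX : MeasBdd m X) : P[X | m] = X :=
  condExp_of_stronglyMeasurable h hX.1.stronglyMeasurable (hX.integrable P h)

/-- one backward step of the conditional certainty equivalent. -/
def CEStep {m0 : MeasurableSpace Ω} (P : Measure Ω) (m : MeasurableSpace Ω) (b : ℝ)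
    (R' R : Ω → ℝ) : Prop :=
  (fun ω => Real.exp (-b * R ω)) =ᵐ[P] P[fun ω => Real.exp (-b * R' ω) | m]

lemma CEStep.shift {m m' m0 : MeasurableSpace Ω} {P : Measure Ω} [IsProbabilityMeasure P]
    (hm : m ≤ m0) (hm' : m' ≤ m0) {b : ℝ} {R' R Y : Ω → ℝ} (hR' : MeasBdd m' R')
    (hY : MeasBdd m Y) (h : CEStep P m b R' R) :
    CEStep P m b (fun ω => R' ω + Y ω) (fun ω => R ω + Y ω) := by
  have hYe := (hY.const_mul (-b)).exp
  have hRe := (hR'.const_mul (-b)).exp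
  have key := condExp_mul_of_stronglyMeasurable_left (μ := P) (m := m)
    (f := fun ω => Real.exp (-b * Y ω)) (g := fun ω => Real.exp (-b * R' ω))
    hYe.1.stronglyMeasurable
    (((hYe.mono hm).mul (hRe.mono hm')).integrable P le_rfl) (hRe.integrable P hm')
  have e : (fun ω => Real.exp (-b * (R' ω + Y ω)))
      = (fun ω => Real.exp (-b * Y ω)) * (fun ω => Real.exp (-b * R' ω)) := by
    funext ω; simp only [Pi.mul_apply, ← Real.exp_add]; congr 1; ring
  unfold CEStep at *
  rw [e]
  filter_upwards [key, h] with ω h1 h2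
  rw [h1, Pi.mul_apply, ← h2, ← Real.exp_add]; congr 1; ring

lemma CEStep.condExp_expV {m m' m0 : MeasurableSpace Ω} {P : Measure Ω} [IsProbabilityMeasure P]
    (hm : m ≤ m0) (hm' : m' ≤ m0) {b : ℝ} {R' R : Ω → ℝ} (hR' : MeasBdd m' R')
    (h : CEStep P m b R' R) :
    P[fun ω => expV b (R' ω) | m] =ᵐ[P] fun ω => expV b (R ω) := by
  have hRe := (hR'.const_mul (-b)).exp
  have e : (fun ω => expV b (R' ω))
      = b⁻¹ • ((fun _ => (1:ℝ)) - fun ω => Real.exp (-b * R' ω)) := by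
    funext ω; simp [expV]
  rw [e]
  have h1 := condExp_smul (μ := P) b⁻¹ ((fun _ => (1:ℝ)) - fun ω => Real.exp (-b * R' ω)) m
  have h2 := condExp_sub (μ := P) (integrable_const (1:ℝ)) (hRe.integrable P hm') m
  rw [condExp_const hm] at h2
  unfold CEStep at h
  filter_upwards [h1, h2, h] with ω h1 h2 h
  rw [h1, Pi.smul_apply, h2, Pi.sub_apply, ← h]; simp [expV]

lemma CEStep.exists {m m' m0 : MeasurableSpace Ω} (P : Measure Ω) [IsProbabilityMeasure P]
    (hm : m ≤ m0) (hm' : m' ≤ m0) {b : ℝ} (hb : 0 < b) {R' : Ω → ℝ} (hR' : MeasBdd m' R') :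
    ∃ R, MeasBdd m R ∧ CEStep P m b R' R := by
  have hRi := (hR'.const_mul (-b)).exp.integrable P hm'
  obtain ⟨_, C, hC⟩ := hR'
  set f := P[fun ω => Real.exp (-b * R' ω) | m] with hf
  have hfm : Measurable[m] f := stronglyMeasurable_condExp.measurable
  have lo : ∀ ω, Real.exp (-(b * C)) ≤ Real.exp (-b * R' ω) := fun ω => by
    apply Real.exp_le_exp.mpr
    nlinarith [(abs_le.mp (hC ω)).2]
  have hi : ∀ ω, Real.exp (-b * R' ω) ≤ Real.exp (b * C) := fun ω => by
    apply Real.exp_le_exp.mpr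
    nlinarith [(abs_le.mp (hC ω)).1]
  have lo' := condExp_mono (m := m) (integrable_const _) hRi (Eventually.of_forall (f := ae P) lo)
  have hi' := condExp_mono (m := m) hRi (integrable_const _) (Eventually.of_forall (f := ae P) hi)
  rw [condExp_const hm] at lo' hi'
  by_cases hne : Nonempty Ω
  swap
  · refine ⟨fun _ => 0, measBdd_const 0, ?_⟩
    exact Eventually.of_forall fun ω => (hne ⟨ω⟩).elim
  obtain ⟨ω0⟩ := hne
  have hC0 : 0 ≤ C := (abs_nonneg _).trans (hC ω0)
  have hle : Real.exp (-(b * C)) ≤ Real.exp (b * C) := (lo ω0).trans (hi ω0)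
  set g : Ω → ℝ := fun ω => max (Real.exp (-(b * C))) (min (f ω) (Real.exp (b * C))) with hg
  have hgm : Measurable[m] g := measurable_const.max (hfm.min measurable_const)
  have glo : ∀ ω, Real.exp (-(b * C)) ≤ g ω := fun ω => le_max_left _ _
  have ghi : ∀ ω, g ω ≤ Real.exp (b * C) := fun ω => max_le hle (min_le_right _ _)
  have gpos : ∀ ω, 0 < g ω := fun ω => (Real.exp_pos _).trans_le (glo ω)
  refine ⟨fun ω => (-b)⁻¹ * Real.log (g ω), MeasBdd.const_mul ⟨hgm.log, b * C, fun ω => ?_⟩ _, ?_⟩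
  · rw [abs_le]
    exact ⟨(Real.le_log_iff_exp_le (gpos ω)).mpr (glo ω),
      (Real.log_le_iff_le_exp (gpos ω)).mpr (ghi ω)⟩
  · unfold CEStep
    filter_upwards [lo', hi'] with ω h1 h2
    have : -b * ((-b)⁻¹ * Real.log (g ω)) = Real.log (g ω) := by field_simp
    rw [this, Real.exp_log (gpos ω), ← hf]
    simp only [hg]
    rw [min_eq_left h2, max_eq_right h1]

/-- `R` is the time `t` conditional certainty equivalent of `W`. -/
inductive CE {m0 : MeasurableSpace Ω} (P : Measure Ω) (ℱ : Filtration ℕ m0) (T : ℕ) (β : ℕ → ℝ) :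
    ℕ → (Ω → ℝ) → (Ω → ℝ) → Prop
  | base (W R : Ω → ℝ) : MeasBdd (ℱ T) R → R =ᵐ[P] W → CE P ℱ T β T W R
  | step (t : ℕ) (W R' R : Ω → ℝ) : t < T → CE P ℱ T β (t + 1) W R' → MeasBdd (ℱ t) R →
      CEStep P (ℱ t) (β (t + 1)) R' R → CE P ℱ T β t W R

variable {m0 : MeasurableSpace Ω} {P : Measure Ω} {ℱ : Filtration ℕ m0} {T : ℕ} {β : ℕ → ℝ}

lemma CE.meas {t : ℕ} {W R : Ω → ℝ} (h : CE P ℱ T β t W R) : MeasBdd (ℱ t) R := by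
  cases h <;> assumption

lemma CE.shift [IsProbabilityMeasure P] {t : ℕ} {W R : Ω → ℝ} (h : CE P ℱ T β t W R)
    {Y : Ω → ℝ} (hY : MeasBdd (ℱ t) Y) :
    CE P ℱ T β t (fun ω => W ω + Y ω) (fun ω => R ω + Y ω) := by
  induction h with
  | base W R hR h =>
    refine CE.base _ _ (hR.add hY) ?_
    filter_upwards [h] with ω h
    rw [h]
  | step t W R' R ht hc hR hs ih =>
    exact CE.step t _ _ _ ht (ih (hY.mono (ℱ.mono (Nat.le_succ t)))) (hR.add hY)
      (hs.shift (ℱ.le _) (ℱ.le _) hc.meas hY)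

lemma CE.exists [IsProbabilityMeasure P] (hβ : ∀ r, r ≤ T → 0 < β r) {W : Ω → ℝ}
    (hW : MeasBdd (ℱ T) W) {t : ℕ} (ht : t ≤ T) : ∃ R, CE P ℱ T β t W R := by
  induction ht using Nat.decreasingInduction with
  | self => exact ⟨W, CE.base _ _ hW ae_eq_rfl⟩
  | of_succ t ht ih =>
    obtain ⟨R', hR'⟩ := ih
    obtain ⟨R, hR, hs⟩ := CEStep.exists P (ℱ.le t) (ℱ.le _) (hβ (t + 1) ht) hR'.meas
    exact ⟨R, CE.step t _ _ _ ht hR' hR hs⟩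

lemma CE.self [IsProbabilityMeasure P] {t : ℕ} (ht : t ≤ T) {W : Ω → ℝ}
    (hW : MeasBdd (ℱ t) W) : CE P ℱ T β t W W := by
  induction ht using Nat.decreasingInduction with
  | self => exact CE.base _ _ hW ae_eq_rfl
  | of_succ t ht ih =>
    refine CE.step t _ _ _ ht (ih (hW.mono (ℱ.mono (Nat.le_succ t)))) hW ?_
    unfold CEStep
    rw [(hW.const_mul _).exp.condExp_eq P (ℱ.le t)]

lemma sum_Icc_split {t T : ℕ} (h : t ≤ T) (f : ℕ → ℝ) :
    ∑ s ∈ Finset.Icc t T, f s = f t + ∑ s ∈ Finset.Icc (t + 1) T, f s := by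
  rw [← Finset.insert_Icc_add_one_left_eq_Icc h, Finset.sum_insert (by simp)]

lemma utilSum1_step [IsProbabilityMeasure P] {u : ℕ → ℝ → ℝ} {t : ℕ} (ht : t < T)
    {X : ℕ → Ω → ℝ} (hX : MeasBdd (ℱ t) (fun ω => u t (X t ω))) :
    utilSum1 P ℱ u t T X =ᵐ[P]
      fun ω => u t (X t ω) + (P[utilSum1 P ℱ u (t + 1) T X | ℱ t]) ω := by
  have e : utilSum1 P ℱ u (t + 1) T X
      = ∑ s ∈ Finset.Icc (t + 1) T, P[fun ω' => u s (X s ω') | ℱ (t + 1)] := by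
    funext ω; simp [utilSum1]
  have h1 := condExp_finsetSum (μ := P) (s := Finset.Icc (t + 1) T)
    (f := fun s => P[fun ω' => u s (X s ω') | ℱ (t + 1)])
    (fun s _ => integrable_condExp) (ℱ t)
  have h2 : ∀ᵐ ω ∂P, ∀ s, (P[P[fun ω' => u s (X s ω') | ℱ (t + 1)] | ℱ t]) ω
      = (P[fun ω' => u s (X s ω') | ℱ t]) ω :=
    ae_all_iff.mpr fun s => condExp_condExp_of_le (ℱ.mono (Nat.le_succ t)) (ℱ.le _)
  rw [e]
  filter_upwards [h1, h2] with ω h1 h2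
  rw [h1, Finset.sum_apply]
  simp only [utilSum1, h2]
  rw [sum_Icc_split ht.le, hX.condExp_eq P (ℱ.le t)]

lemma CE.value [IsProbabilityMeasure P] {α : ℕ → ℝ} (hα : ∀ s, 0 < α s)
    {u : ℕ → ℝ → ℝ} (hu : ∀ s, u s = expV (α s))
    (hβpos : ∀ r, r ≤ T → 0 < β r)
    (hβ : ∀ r, r ≤ T → (β r)⁻¹ = ∑ s ∈ Finset.Icc r T, (α s)⁻¹)
    {t : ℕ} (ht : t ≤ T) : ∀ {W R : Ω → ℝ}, CE P ℱ T β t W R →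
    (∀ X, IsDiv1 P ℱ t T W X → utilSum1 P ℱ u t T X ≤ᵐ[P] fun ω => expV (β t) (R ω)) ∧
    ∃ X, IsDiv1 P ℱ t T W X ∧ utilSum1 P ℱ u t T X =ᵐ[P] fun ω => expV (β t) (R ω) := by
  induction ht using Nat.decreasingInduction with
  | self =>
    intro W R h
    have hb : β T = α T := by simpa using hβ T le_rfl
    cases h with
    | step _ _ _ _ h => exact absurd h (lt_irrefl _)
    | base _ _ hR h =>
      constructor
      · intro X hX
        have hXm := hX.1 T (by simp)
        filter_upwards [hX.2, h] with ω h1 h2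
        simp only [utilSum1, Finset.Icc_self, Finset.sum_singleton] at h1 ⊢
        rw [hu, (hXm.expV _).condExp_eq P (ℱ.le T)]
        simp only [h1, h2, hb, le_refl]
      · refine ⟨fun _ => R, ⟨fun s hs => ?_, ?_⟩, ?_⟩
        · simp only [Finset.Icc_self, Finset.mem_singleton] at hs
          rw [hs]; exact hR
        · filter_upwards [h] with ω h
          simpa using h
        · refine Eventually.of_forall fun ω => ?_
          simp only [utilSum1, Finset.Icc_self, Finset.sum_singleton]
          rw [hu, (hR.expV _).condExp_eq P (ℱ.le T), hb]
  | of_succ t ht ih =>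
    intro W R h
    have hbb : (β t)⁻¹ = (α t)⁻¹ + (β (t + 1))⁻¹ := by
      rw [hβ t (Nat.le_of_lt ht), hβ (t + 1) ht, sum_Icc_split (Nat.le_of_lt ht)]
    have hb1 := hβpos t (Nat.le_of_lt ht)
    have hb2 := hβpos (t + 1) ht
    cases h with
    | base => exact absurd ht (lt_irrefl _)
    | step _ _ R' _ _ hc hR hs =>
      constructor
      · intro X hX
        have hXt := hX.1 t (by simp; exact Nat.le_of_lt ht)
        have hXn := hXt.neg
        have hsh := hc.shift (hXn.mono (ℱ.mono (Nat.le_succ t)))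
        have hss := hs.shift (ℱ.le _) (ℱ.le _) hc.meas hXn
        have hv := hss.condExp_expV (ℱ.le _) (ℱ.le _) hsh.meas
        have hle := (ih hsh).1 X ⟨fun s hs => hX.1 s (by simp at hs ⊢; omega), by
          filter_upwards [hX.2] with ω h
          rw [sum_Icc_split (Nat.le_of_lt ht)] at h
          linarith⟩
        have hi : Integrable (utilSum1 P ℱ u (t + 1) T X) P :=
          integrable_finsetSum _ fun s _ => integrable_condExp
        have hmono := condExp_mono (m := ℱ t) hi
          ((hsh.meas.expV _).integrable P (ℱ.le _)) hle
        have hst := utilSum1_step (P := P) (ℱ := ℱ) (u := u) ht (X := X)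
          (by rw [hu]; exact hXt.expV _)
        filter_upwards [hst, hmono, hv] with ω h1 h2 h3
        rw [h1, hu]
        rw [h3] at h2
        have := expV_conv_le (hα t) hb2 hb1 hbb (X t ω) (R ω + - X t ω)
        rw [show X t ω + (R ω + - X t ω) = R ω by ring] at this
        linarith
      · have hY : MeasBdd (ℱ t) (fun ω => β t * (α t)⁻¹ * R ω) := hR.const_mul _
        set Y : Ω → ℝ := fun ω => β t * (α t)⁻¹ * R ω with hYdef
        have hYn := hY.neg
        have hsh := hc.shift (hYn.mono (ℱ.mono (Nat.le_succ t)))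
        have hss := hs.shift (ℱ.le _) (ℱ.le _) hc.meas hYn
        have hv := hss.condExp_expV (ℱ.le _) (ℱ.le _) hsh.meas
        obtain ⟨X, hX, hXe⟩ := (ih hsh).2
        have hupd : ∀ s ∈ Finset.Icc (t + 1) T, Function.update X t Y s = X s := by
          intro s hs
          apply Function.update_of_ne
          simp at hs; omega
        refine ⟨Function.update X t Y, ⟨fun s hs => ?_, ?_⟩, ?_⟩
        · by_cases hst : s = t
          · subst hst; simpa using hY
          · have : s ∈ Finset.Icc (t + 1) T := by simp at hs ⊢; omega
            rw [hupd s this]; exact hX.1 s this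
        · filter_upwards [hX.2] with ω h
          rw [sum_Icc_split (Nat.le_of_lt ht) (fun s => Function.update X t Y s ω),
            Finset.sum_congr rfl (fun s hs => by rw [hupd s hs]), h]
          simp
        · have hst := utilSum1_step (P := P) (ℱ := ℱ) (u := u) ht (X := Function.update X t Y)
            (by rw [hu]; simpa using hY.expV _)
          have e : utilSum1 P ℱ u (t + 1) T (Function.update X t Y)
              = utilSum1 P ℱ u (t + 1) T X := by
            funext ω
            unfold utilSum1
            exact Finset.sum_congr rfl (fun s hs => by rw [hupd s hs])
          rw [e] at hst
          filter_upwards [hst, condExp_congr_ae (m := ℱ t) hXe, hv] with ω h1 h2 h3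
          rw [h1, h2, h3, hu, Function.update_self, ← sub_eq_add_neg]
          exact expV_conv_eq (hα t) hb2 hb1 hbb (R ω)

end Helpers

/-- Theorem 2.24, dynamic programming property: in the exponential case,
`H_t(Z) = H_t(H_{t+τ}(Z))` a.s. -/
theorem exponential_premium_dynamic_programming
    {m0 : MeasurableSpace Ω} (P : Measure Ω) [IsProbabilityMeasure P]
    (ℱ : Filtration ℕ m0) (T : ℕ) (hT : 0 < T)
    (α : ℕ → ℝ) (hα : ∀ s, 0 < α s)
    (u : ℕ → ℝ → ℝ) (hu : ∀ s, u s = fun x => (α s)⁻¹ * (1 - Real.exp (-(α s) * x)))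
    (β : ℕ → ℝ) (hβpos : ∀ r, r ≤ T → 0 < β r)
    (hβ : ∀ r, r ≤ T → (β r)⁻¹ = ∑ s ∈ Finset.Icc r T, (α s)⁻¹)
    (U : ℕ → (Ω → ℝ) → Ω → ℝ)
    (hU : ∀ t, t ≤ T → ∀ W : Ω → ℝ, MeasBdd (ℱ T) W →
      IsEssSupOf P
        {g | ∃ X : ℕ → Ω → ℝ, IsDiv1 P ℱ t T W X ∧ g = utilSum1 P ℱ u t T X}
        (U t W))
    (H : ℕ → (Ω → ℝ) → Ω → ℝ)
    (hH : ∀ t, t ≤ T → ∀ W : Ω → ℝ, MeasBdd (ℱ T) W →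
      IsEssInfOf P
        {K | MeasBdd (ℱ t) K ∧ U t (fun _ => 0) ≤ᵐ[P] U t (fun ω => K ω - W ω)}
        (H t W))
    -- `H` is chosen with regular versions, i.e. `H_t` maps `L^∞_T` into `L^∞_t`:
    (hHreg : ∀ t, t ≤ T → ∀ W : Ω → ℝ, MeasBdd (ℱ T) W → MeasBdd (ℱ t) (H t W))
    (Z : Ω → ℝ) (hZ : MeasBdd (ℱ T) Z) :
    ∀ τ t : ℕ, 1 ≤ τ → τ ≤ T → t + τ ≤ T →
      H t Z =ᵐ[P] H t (H (t + τ) Z) := by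
  have hu' : ∀ s, u s = expV (α s) := fun s => hu s
  have hUv : ∀ t, t ≤ T → ∀ W R : Ω → ℝ, MeasBdd (ℱ T) W → CE P ℱ T β t W R →
      U t W =ᵐ[P] fun ω => expV (β t) (R ω) := by
    intro t ht W R hW hR
    obtain ⟨h1, X, hX, h2⟩ := hR.value hα hu' hβpos hβ ht
    have hs := hU t ht W hW
    refine (hs.2 _ ?_).antisymm (h2.symm.le.trans (hs.1 _ ⟨X, hX, rfl⟩))
    rintro f ⟨X', hX', rfl⟩
    exact h1 X' hX'
  have hHv : ∀ t, t ≤ T → ∀ W R : Ω → ℝ, MeasBdd (ℱ T) W →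
      CE P ℱ T β t (fun ω => - W ω) R → H t W =ᵐ[P] fun ω => - R ω := by
    intro t ht W R hW hR
    have h0 := hUv t ht (fun _ => 0) (fun _ => 0) (measBdd_const 0)
      (CE.self ht (measBdd_const 0))
    have hiff : ∀ K, MeasBdd (ℱ t) K →
        (U t (fun _ => 0) ≤ᵐ[P] U t (fun ω => K ω - W ω) ↔ (fun ω => - R ω) ≤ᵐ[P] K) := by
      intro K hK
      have hsh := hR.shift hK
      have e : (fun ω => - W ω + K ω) = fun ω => K ω - W ω := by funext ω; ring
      rw [e] at hsh
      have h1 := hUv t ht _ _ ((hK.mono (ℱ.mono ht)).sub hW) hsh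
      have h00 : expV (β t) 0 = 0 := by simp [expV]
      constructor
      · intro h
        filter_upwards [h, h0, h1] with ω h h0 h1
        rw [h0, h1, h00, expV_nonneg_iff (hβpos t ht)] at h
        linarith
      · intro h
        filter_upwards [h, h0, h1] with ω h h0 h1
        rw [h0, h1, h00, expV_nonneg_iff (hβpos t ht)]
        linarith
    have hs := hH t ht W hW
    refine (hs.1 _ ⟨hR.meas.neg, (hiff _ hR.meas.neg).mpr (EventuallyLE.refl _ _)⟩).antisymm
      (hs.2 _ ?_)
    rintro K ⟨hK, hK2⟩
    exact (hiff K hK).mp hK2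
  have hstep : ∀ t, t < T → ∀ W : Ω → ℝ, MeasBdd (ℱ T) W →
      (fun ω => Real.exp (β (t + 1) * H t W ω)) =ᵐ[P]
        P[fun ω => Real.exp (β (t + 1) * H (t + 1) W ω) | ℱ t] := by
    intro t ht W hW
    obtain ⟨R', hR'⟩ := CE.exists (P := P) hβpos hW.neg (t := t + 1) ht
    obtain ⟨R, hR, hs⟩ := CEStep.exists P (ℱ.le t) (ℱ.le _) (hβpos (t + 1) ht) hR'.meas
    have h1 := hHv (t + 1) ht W R' hW hR'
    have h2 := hHv t ht.le W R hW (CE.step t _ _ _ ht hR' hR hs)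
    have h3 : (fun ω => Real.exp (β (t + 1) * H (t + 1) W ω)) =ᵐ[P]
        fun ω => Real.exp (-β (t + 1) * R' ω) := by
      filter_upwards [h1] with ω h
      rw [h]; congr 1; ring
    unfold CEStep at hs
    filter_upwards [h2, hs, condExp_congr_ae (m := ℱ t) h3] with ω h2 hs h3
    rw [h3, ← hs, h2]; congr 1; ring
  intro τ t _ _ htT
  have hYr := hHreg (t + τ) htT Z hZ
  set r := t + τ with hr
  have hYT : MeasBdd (ℱ T) (H r Z) := hYr.mono (ℱ.mono htT)
  have htr : t ≤ r := by omega
  clear_value r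
  clear hr
  induction htr using Nat.decreasingInduction with
  | self =>
    have h := hHv r htT _ _ hYT (CE.self htT hYr.neg)
    filter_upwards [h] with ω h
    rw [h]; ring
  | of_succ t ht ih =>
    have htT' : t < T := lt_of_lt_of_le ht htT
    have e : (fun ω => Real.exp (β (t + 1) * H (t + 1) Z ω)) =ᵐ[P]
        fun ω => Real.exp (β (t + 1) * H (t + 1) (H r Z) ω) := by
      filter_upwards [ih] with ω h
      rw [h]
    filter_upwards [hstep t htT' Z hZ, hstep t htT' _ hYT, condExp_congr_ae (m := ℱ t) e]
      with ω h1 h2 h3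
    rw [h3, ← h2] at h1
    exact mul_left_cancel₀ (hβpos (t + 1) htT').ne' (Real.exp_injective h1)
end

section
/- Suppose 𝓕_0 is P-trivial and that for each i = 1,2,… and s = 0,…,T the function u_{i,s} is C^2 with u_{i,s}'' nondecreasing, and the divergence condition Σ_{i=1}^∞ ∫_0^δ (δ−λ)/u_{i,s}''(I_{i,s}(1+λ)) dλ = −∞ holds for every δ > 0 and every s, where I_{i,s} is the inverse of u_{i,s}'. Then for every Z ∈ L^∞_T, lim_{n→∞} H_{n,0}(Z) = E[Z]. -/
open MeasureTheory Filter

variable {Ω : Type*}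

/-- A diversification of `Z` at time `t`: an adapted family `(X i s)`,
`i = 1,…,n`, `s = t,…,T`, of essentially bounded random variables summing to `Z`. -/
def IsDiv {m0 : MeasurableSpace Ω} (P : Measure Ω) (ℱ : Filtration ℕ m0)
    (n t T : ℕ) (Z : Ω → ℝ) (X : ℕ → ℕ → Ω → ℝ) : Prop :=
  (∀ i ∈ Finset.Icc 1 n, ∀ s ∈ Finset.Icc t T, MeasBdd (ℱ s) (X i s)) ∧
  ∀ᵐ ω ∂P, (∑ i ∈ Finset.Icc 1 n, ∑ s ∈ Finset.Icc t T, X i s ω) = Z ω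

/-- The total conditional expected utility `∑_{i,s} E[u_{i,s}(X_{i,s}) | 𝓕_t]`. -/
noncomputable def utilSum {m0 : MeasurableSpace Ω} (P : Measure Ω) (ℱ : Filtration ℕ m0)
    (u : ℕ → ℕ → ℝ → ℝ) (n t T : ℕ) (X : ℕ → ℕ → Ω → ℝ) : Ω → ℝ :=
  fun ω => ∑ i ∈ Finset.Icc 1 n, ∑ s ∈ Finset.Icc t T,
    (P[fun ω' => u i s (X i s ω') | ℱ t]) ω

/-- The time-0 utility `U_{n,0}(Z)` (with `𝓕_0` trivial, a real number):
`sup { Σ_{(i,s)} E[u_{i,s}(X_{i,s})] : (X_{i,s}) ∈ 𝓐_{n,0}(Z) }`. -/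
noncomputable def U0 {m0 : MeasurableSpace Ω} (P : Measure Ω) (ℱ : Filtration ℕ m0)
    (u : ℕ → ℕ → ℝ → ℝ) (n T : ℕ) (Z : Ω → ℝ) : ℝ :=
  sSup {r | ∃ X : ℕ → ℕ → Ω → ℝ, IsDiv P ℱ n 0 T Z X ∧
    r = ∑ i ∈ Finset.Icc 1 n, ∑ s ∈ Finset.Icc 0 T, ∫ ω, u i s (X i s ω) ∂P}

/-- The time-0 indifference premium `H_{n,0}(Z) = inf { K ∈ ℝ : U_{n,0}(K − Z) ≥ 0 }`. -/
noncomputable def H0 {m0 : MeasurableSpace Ω} (P : Measure Ω) (ℱ : Filtration ℕ m0)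
    (u : ℕ → ℕ → ℝ → ℝ) (n T : ℕ) (Z : Ω → ℝ) : ℝ :=
  sInf {K : ℝ | 0 ≤ U0 P ℱ u n T fun ω => K - Z ω}

lemma aux_neg {u u' u'' : ℝ → ℝ} (hu : IsUtility u u')
    (h2 : (∀ x, HasDerivAt u' (u'' x) x) ∧ Continuous u'' ∧ Monotone u'') :
    StrictAnti u' ∧ ∀ x, u'' x < 0 := by
  have hd : deriv u = u' := funext fun x => (hu.hasDeriv x).deriv
  have hanti : StrictAnti u' := by
    have := hu.strictConcave.strictAntiOn_deriv (fun x _ => (hu.hasDeriv x).differentiableAt)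
    rw [hd] at this
    exact fun a b h => this (Set.mem_univ _) (Set.mem_univ _) h
  refine ⟨hanti, fun x => ?_⟩
  by_contra hx
  push Not at hx
  have hmono : MonotoneOn u' (Set.Ici x) := by
    apply monotoneOn_of_deriv_nonneg (convex_Ici x) hu.derivCont.continuousOn
      (fun y _ => (h2.1 y).differentiableAt.differentiableWithinAt)
    intro y hy
    rw [interior_Ici] at hy
    rw [(h2.1 y).deriv]
    exact hx.trans (h2.2.2 (le_of_lt hy))
  have h1 := hmono (Set.mem_Ici.2 le_rfl) (Set.mem_Ici.2 (by linarith : x ≤ x + 1)) (by linarith)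
  have h3 := hanti (by linarith : x < x + 1)
  linarith

lemma aux_surj {u u' : ℝ → ℝ} (hu : IsUtility u u') {y : ℝ} (hy : 1 ≤ y) : ∃ x, u' x = y := by
  obtain ⟨a, ha⟩ := (hu.deriv_bot.eventually_ge_atTop y).exists
  exact mem_range_of_exists_le_of_exists_ge hu.derivCont ⟨0, by rw [hu.deriv_zero]; exact hy⟩
    ⟨a, ha⟩

/-- gradient bounds around zero -/
lemma aux_bound {u u' u'' : ℝ → ℝ} (hu : IsUtility u u')
    (h2 : (∀ x, HasDerivAt u' (u'' x) x) ∧ Continuous u'' ∧ Monotone u'')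
    {b δ : ℝ} (hb : u' (-b) = 1 + δ) {x : ℝ} (hx : |x| ≤ b) :
    x - δ * |x| ≤ u x := by
  have hanti := (aux_neg hu h2).1
  have hconv : ConvexOn ℝ Set.univ u' := by
    apply Monotone.convexOn_univ_of_deriv (fun y => (h2.1 y).differentiableAt)
    have : deriv u' = u'' := funext fun x => (h2.1 x).deriv
    rw [this]; exact h2.2.2
  have hsum : 1 - δ ≤ u' b := by
    have := hconv.2 (Set.mem_univ b) (Set.mem_univ (-b)) (by norm_num : (0:ℝ) ≤ 1/2)
      (by norm_num : (0:ℝ) ≤ 1/2) (by norm_num)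
    simp only [smul_eq_mul] at this
    rw [show (1/2 : ℝ) * b + 1/2 * -b = 0 by ring, hu.deriv_zero, hb] at this
    linarith
  obtain ⟨hx1, hx2⟩ := abs_le.1 hx
  rcases lt_trichotomy x 0 with h | h | h
  · obtain ⟨c, hc, hc'⟩ := exists_hasDerivAt_eq_slope u u' h
      (fun y _ => (hu.hasDeriv y).continuousAt.continuousWithinAt) (fun y _ => hu.hasDeriv y)
    rw [eq_div_iff (by linarith), hu.zero] at hc'
    have : u' c ≤ 1 + δ := hb ▸ hanti.antitone (by linarith [hc.1] : -b ≤ c)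
    rw [abs_of_neg h]
    nlinarith
  · subst h; simp [hu.zero]
  · obtain ⟨c, hc, hc'⟩ := exists_hasDerivAt_eq_slope u u' h
      (fun y _ => (hu.hasDeriv y).continuousAt.continuousWithinAt) (fun y _ => hu.hasDeriv y)
    rw [eq_div_iff (by linarith), hu.zero] at hc'
    have : u' b ≤ u' c := hanti.antitone (by linarith [hc.2] : c ≤ b)
    rw [abs_of_pos h]
    nlinarith

lemma aux_le {u u' u'' : ℝ → ℝ} (hu : IsUtility u u')
    (h2 : (∀ x, HasDerivAt u' (u'' x) x) ∧ Continuous u'' ∧ Monotone u'') (x : ℝ) :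
    u x ≤ x := by
  have hanti := (aux_neg hu h2).1
  rcases lt_trichotomy x 0 with h | h | h
  · obtain ⟨c, hc, hc'⟩ := exists_hasDerivAt_eq_slope u u' h
      (fun y _ => (hu.hasDeriv y).continuousAt.continuousWithinAt) (fun y _ => hu.hasDeriv y)
    rw [eq_div_iff (by linarith), hu.zero] at hc'
    have : u' 0 ≤ u' c := hanti.antitone hc.2.le
    rw [hu.deriv_zero] at this
    nlinarith
  · subst h; simp [hu.zero]
  · obtain ⟨c, hc, hc'⟩ := exists_hasDerivAt_eq_slope u u' h
      (fun y _ => (hu.hasDeriv y).continuousAt.continuousWithinAt) (fun y _ => hu.hasDeriv y)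
    rw [eq_div_iff (by linarith), hu.zero] at hc'
    have : u' c ≤ u' 0 := hanti.antitone hc.1.le
    rw [hu.deriv_zero] at this
    nlinarith

/-- the integral in the divergence condition is controlled by `I (1+δ)` -/
lemma aux_int {u u' u'' I : ℝ → ℝ} (hu : IsUtility u u')
    (h2 : (∀ x, HasDerivAt u' (u'' x) x) ∧ Continuous u'' ∧ Monotone u'')
    (hI : ∀ x, I (u' x) = x) {δ : ℝ} (hδ : 0 < δ) :
    δ * I (1 + δ) ≤ ∫ l in (0:ℝ)..δ, (δ - l) / u'' (I (1 + l)) := by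
  obtain ⟨-, hneg⟩ := aux_neg hu h2
  have hder : ∀ l, 0 ≤ l → HasDerivAt (fun l => I (1 + l)) (u'' (I (1 + l)))⁻¹ l := by
    intro l hl
    obtain ⟨x, hx⟩ := aux_surj hu (by linarith : 1 ≤ 1 + l)
    have hs : HasStrictDerivAt u' (u'' x) x :=
      hasStrictDerivAt_of_hasDerivAt_of_continuousAt (Eventually.of_forall h2.1)
        h2.2.1.continuousAt
    have := (hs.to_local_left_inverse (hneg x).ne (Eventually.of_forall hI)).hasDerivAt
    rw [hx] at this
    have h3 : I (1 + l) = x := by rw [← hx, hI]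
    rw [h3]
    exact this.comp_const_add 1 l
  have hcI : ContinuousOn (fun l => I (1 + l)) (Set.uIcc 0 δ) := by
    intro l hl
    rw [Set.uIcc_of_le hδ.le] at hl
    exact (hder l hl.1).continuousAt.continuousWithinAt
  have hc2 : ContinuousOn (fun l => (u'' (I (1 + l)))⁻¹) (Set.uIcc 0 δ) :=
    (h2.2.1.comp_continuousOn hcI).inv₀ (fun l _ => (hneg _).ne)
  have hint : ∫ l in (0:ℝ)..δ, (u'' (I (1 + l)))⁻¹ = I (1 + δ) := by
    rw [intervalIntegral.integral_eq_sub_of_hasDerivAt (f := fun l => I (1 + l))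
      (fun l hl => hder l (by rw [Set.uIcc_of_le hδ.le] at hl; exact hl.1)) hc2.intervalIntegrable]
    have : I 1 = 0 := by rw [← hu.deriv_zero, hI]
    simp [this]
  rw [← hint, ← intervalIntegral.integral_const_mul]
  apply intervalIntegral.integral_mono_on hδ.le
  · exact (continuousOn_const.mul hc2).intervalIntegrable
  · simp only [div_eq_mul_inv]
    exact ((continuousOn_const.sub continuousOn_id).mul hc2).intervalIntegrable
  · intro l hl
    rw [div_eq_mul_inv]
    exact mul_le_mul_of_nonpos_right (by linarith [hl.1]) (inv_nonpos.2 (hneg _).le)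

lemma aux_integrable {m0 : MeasurableSpace Ω} (P : Measure Ω) [IsProbabilityMeasure P]
    {u u' : ℝ → ℝ} (hu : IsUtility u u') {X : Ω → ℝ} (hX : Measurable X)
    (hb : ∃ C : ℝ, ∀ ω, |X ω| ≤ C) : Integrable (fun ω => u (X ω)) P := by
  obtain ⟨C, hC⟩ := hb
  have hc : Continuous u := continuous_iff_continuousAt.2 fun x => (hu.hasDeriv x).continuousAt
  apply Integrable.of_bound (hc.measurable.comp hX).aestronglyMeasurable (|u C| + |u (-C)|)
  refine Eventually.of_forall fun ω => ?_
  obtain ⟨h1, h2⟩ := abs_le.1 (hC ω)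
  have h3 := hu.strictMono.monotone h1
  have h4 := hu.strictMono.monotone h2
  rw [Real.norm_eq_abs]
  simp only [Function.comp]
  rw [abs_le]
  constructor
  · linarith [neg_abs_le (u (-C)), abs_nonneg (u C)]
  · linarith [le_abs_self (u C), abs_nonneg (u (-C))]

lemma aux_integrable_id {m0 : MeasurableSpace Ω} (P : Measure Ω) [IsProbabilityMeasure P]
    {X : Ω → ℝ} (hX : Measurable X)
    (hb : ∃ C : ℝ, ∀ ω, |X ω| ≤ C) : Integrable X P := by
  obtain ⟨C, hC⟩ := hb
  exact Integrable.of_bound hX.aestronglyMeasurable C (Eventually.of_forall fun ω => by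
    rw [Real.norm_eq_abs]; exact hC ω)

/-- Put everything at the last date, with weights `w`. -/
lemma aux_div {m0 : MeasurableSpace Ω} (P : Measure Ω)
    (ℱ : Filtration ℕ m0) (n T : ℕ) (w : ℕ → ℝ) (hw : ∑ i ∈ Finset.Icc 1 n, w i = 1)
    (Y : Ω → ℝ) (hY : MeasBdd (ℱ T) Y) :
    IsDiv P ℱ n 0 T Y (fun i s ω => if s = T then w i * Y ω else 0) := by
  constructor
  · intro i _ s _
    by_cases h : s = T
    · subst h
      obtain ⟨hm, C, hC⟩ := hY
      simp only [if_true]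
      refine ⟨hm.const_mul _, |w i| * C, fun ω => ?_⟩
      rw [abs_mul]
      exact mul_le_mul_of_nonneg_left (hC ω) (abs_nonneg _)
    · simp only [h, if_false]
      exact ⟨measurable_const, 0, fun ω => by simp⟩
  · refine Eventually.of_forall fun ω => ?_
    simp [← Finset.sum_mul, hw]

lemma aux_upper {m0 : MeasurableSpace Ω} (P : Measure Ω) [IsProbabilityMeasure P]
    (ℱ : Filtration ℕ m0) (n T : ℕ) (u u' u'' : ℕ → ℕ → ℝ → ℝ)
    (hu : ∀ i s, IsUtility (u i s) (u' i s))
    (hu'' : ∀ i s, (∀ x, HasDerivAt (u' i s) (u'' i s x) x) ∧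
      Continuous (u'' i s) ∧ Monotone (u'' i s))
    (Y : Ω → ℝ) (X : ℕ → ℕ → Ω → ℝ) (hX : IsDiv P ℱ n 0 T Y X) :
    ∑ i ∈ Finset.Icc 1 n, ∑ s ∈ Finset.Icc 0 T, ∫ ω, u i s (X i s ω) ∂P ≤ ∫ ω, Y ω ∂P := by
  obtain ⟨h1, h2⟩ := hX
  have hi : ∀ i ∈ Finset.Icc 1 n, ∀ s ∈ Finset.Icc 0 T, Integrable (X i s) P := fun i hi s hs =>
    aux_integrable_id P ((h1 i hi s hs).1.mono (ℱ.le s) le_rfl) (h1 i hi s hs).2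
  rw [← integral_congr_ae h2, integral_finsetSum _
    (fun i hi' => integrable_finsetSum _ (fun s hs => hi i hi' s hs))]
  refine Finset.sum_le_sum fun i hi' => ?_
  rw [integral_finsetSum _ (fun s hs => hi i hi' s hs)]
  refine Finset.sum_le_sum fun s hs => ?_
  exact integral_mono (aux_integrable P (hu i s) ((h1 i hi' s hs).1.mono (ℱ.le s) le_rfl)
    (h1 i hi' s hs).2) (hi i hi' s hs) (fun ω => aux_le (hu i s) (hu'' i s) _)

/-- Theorem 3.3: under the divergence condition on the second
derivatives, the indifference premium converges to the expectation:
`H_{n,0}(Z) → E[Z]` as `n → ∞`. -/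
theorem premium_tendsto_expectation_of_many_products
    {m0 : MeasurableSpace Ω} (P : Measure Ω) [IsProbabilityMeasure P]
    (ℱ : Filtration ℕ m0) (T : ℕ) (hT : 0 < T)
    -- `𝓕_0` is `P`-trivial:
    (hF0 : ∀ A : Set Ω, MeasurableSet[ℱ 0] A → P A = 0 ∨ P A = 1)
    (u u' u'' : ℕ → ℕ → ℝ → ℝ)
    (hu : ∀ i s, IsUtility (u i s) (u' i s))
    -- `C²` with nondecreasing second derivative:
    (hu'' : ∀ i s, (∀ x, HasDerivAt (u' i s) (u'' i s x) x) ∧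
      Continuous (u'' i s) ∧ Monotone (u'' i s))
    -- `I i s` is the inverse function of `u' i s`:
    (I : ℕ → ℕ → ℝ → ℝ) (hI : ∀ i s, ∀ x : ℝ, I i s (u' i s x) = x)
    -- the divergence condition (3.1):
    (hdiv : ∀ s, s ≤ T → ∀ δ : ℝ, 0 < δ →
      Filter.Tendsto
        (fun n => ∑ i ∈ Finset.Icc 1 n,
          ∫ l in (0:ℝ)..δ, (δ - l) / u'' i s (I i s (1 + l)))
        Filter.atTop Filter.atBot)
    (Z : Ω → ℝ) (hZ : MeasBdd (ℱ T) Z) :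
    Filter.Tendsto (fun n => H0 P ℱ u n T Z) Filter.atTop
      (nhds (∫ ω, Z ω ∂P)) := by
  obtain ⟨hZm, C₀, hC₀⟩ := hZ
  have hZint : Integrable Z P := aux_integrable_id P (hZm.mono (ℱ.le T) le_rfl) ⟨C₀, hC₀⟩
  set e := ∫ ω, Z ω ∂P with he
  have hKm : ∀ K : ℝ, MeasBdd (ℱ T) (fun ω => K - Z ω) := fun K =>
    ⟨measurable_const.sub hZm, |K| + C₀, fun ω => (abs_sub _ _).trans (by linarith [hC₀ ω])⟩
  have hKint : ∀ K : ℝ, ∫ ω, (K - Z ω) ∂P = K - e := fun K => by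
    rw [integral_sub (integrable_const _) hZint]; simp [he]
  -- lower bound on admissible premia
  have hlow : ∀ n : ℕ, 1 ≤ n → ∀ K ∈ {K : ℝ | 0 ≤ U0 P ℱ u n T fun ω => K - Z ω}, e ≤ K := by
    intro n hn K hK
    have h1 : U0 P ℱ u n T (fun ω => K - Z ω) ≤ K - e := by
      apply csSup_le
      · exact ⟨_, _, aux_div P ℱ n T (fun i => if i = 1 then 1 else 0) (by simp [hn])
          _ (hKm K), rfl⟩
      · rintro r ⟨X, hX, rfl⟩
        rw [← hKint]
        exact aux_upper P ℱ n T u u' u'' hu hu'' _ X hX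
    have h2 : 0 ≤ U0 P ℱ u n T fun ω => K - Z ω := hK
    linarith
  -- for large `n` the premium `e + ε` is admissible
  have hup : ∀ ε : ℝ, 0 < ε → ∀ᶠ n : ℕ in atTop,
      e + ε ∈ {K : ℝ | 0 ≤ U0 P ℱ u n T fun ω => K - Z ω} := by
    intro ε hε
    obtain ⟨hYm, C₁, hC₁⟩ := hKm (e + ε)
    set C := max C₁ 1 with hCdef
    have hCpos : 0 < C := lt_of_lt_of_le one_pos (le_max_right _ _)
    have hC : ∀ ω, |e + ε - Z ω| ≤ C := fun ω => (hC₁ ω).trans (le_max_left _ _)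
    set δ := ε / C with hδdef
    have hδ : 0 < δ := div_pos hε hCpos
    have hev := (hdiv T le_rfl δ hδ).eventually_le_atBot (-(δ * C))
    filter_upwards [hev] with n hn
    set b : ℕ → ℝ := fun i => -I i T (1 + δ) with hb
    have hbu : ∀ i, u' i T (-b i) = 1 + δ := by
      intro i
      obtain ⟨x, hx⟩ := aux_surj (hu i T) (by linarith : 1 ≤ 1 + δ)
      simp only [hb, neg_neg]
      rw [← hx, hI]
    have hb0 : ∀ i, 0 ≤ b i := by
      intro i
      have h1 : u' i T 0 < u' i T (-b i) := by rw [hbu, (hu i T).deriv_zero]; linarith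
      have := (aux_neg (hu i T) (hu'' i T)).1.lt_iff_gt.1 h1
      linarith
    set S := ∑ i ∈ Finset.Icc 1 n, b i with hS
    have hSC : C ≤ S := by
      have h1 : ∑ i ∈ Finset.Icc 1 n, δ * I i T (1 + δ) ≤ -(δ * C) :=
        (Finset.sum_le_sum fun i _ => aux_int (hu i T) (hu'' i T) (hI i T) hδ).trans hn
      have h2 : ∑ i ∈ Finset.Icc 1 n, δ * I i T (1 + δ) = -(δ * S) := by
        rw [hS, hb, ← Finset.mul_sum, Finset.sum_neg_distrib]; ring
      rw [h2] at h1
      exact le_of_mul_le_mul_left (by linarith) hδ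
    have hSpos : 0 < S := hCpos.trans_le hSC
    have hw : ∑ i ∈ Finset.Icc 1 n, b i / S = 1 := by
      rw [← Finset.sum_div]; exact div_self hSpos.ne'
    have hD := aux_div P ℱ n T (fun i => b i / S) hw _ ⟨hYm, C₁, hC₁⟩
    show 0 ≤ sSup _
    refine le_trans ?_ (le_csSup ⟨e + ε - e, ?_⟩ ⟨_, hD, rfl⟩)
    · have hterm : ∀ i ∈ Finset.Icc 1 n, ∑ s ∈ Finset.Icc 0 T,
          ∫ ω, u i s (if s = T then b i / S * (e + ε - Z ω) else 0) ∂P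
          = ∫ ω, u i T (b i / S * (e + ε - Z ω)) ∂P := by
        intro i _
        rw [Finset.sum_eq_single T]
        · simp
        · intro s _ hs
          simp [hs, (hu i s).zero]
        · intro h; simp at h
      rw [Finset.sum_congr rfl hterm]
      have hge : ∀ i ∈ Finset.Icc 1 n, 0 ≤ ∫ ω, u i T (b i / S * (e + ε - Z ω)) ∂P := by
        intro i _
        have hwi : 0 ≤ b i / S := div_nonneg (hb0 i) hSpos.le
        have hYint : Integrable (fun ω => e + ε - Z ω) P := (integrable_const _).sub hZint
        have hYm' : Measurable (fun ω => e + ε - Z ω) := hYm.mono (ℱ.le T) le_rfl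
        have hle : ∀ ω, b i / S * (e + ε - Z ω) - b i / S * ε ≤ u i T (b i / S * (e + ε - Z ω)) := by
          intro ω
          have habs : |b i / S * (e + ε - Z ω)| ≤ b i / S * C := by
            rw [abs_mul, abs_of_nonneg hwi]
            exact mul_le_mul_of_nonneg_left (hC ω) hwi
          have hbC : b i / S * C ≤ b i := by
            rw [div_mul_eq_mul_div, div_le_iff₀ hSpos]
            exact mul_le_mul_of_nonneg_left hSC (hb0 i)
          have h1 := aux_bound (hu i T) (hu'' i T) (hbu i) (habs.trans hbC)
          have h2 := mul_le_mul_of_nonneg_left habs hδ.le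
          have h3 : δ * (b i / S * C) = b i / S * ε := by
            rw [hδdef]; field_simp
          linarith
        calc (0:ℝ) = ∫ ω, (b i / S * (e + ε - Z ω) - b i / S * ε) ∂P := by
              rw [integral_sub (hYint.const_mul _) (integrable_const _), integral_const_mul,
                hKint]
              simp
          _ ≤ _ := integral_mono ((hYint.const_mul _).sub (integrable_const _))
              (aux_integrable P (hu i T) (hYm'.const_mul _) ⟨b i / S * C, fun ω => by
                rw [abs_mul, abs_of_nonneg hwi]
                exact mul_le_mul_of_nonneg_left (hC ω) hwi⟩) hle
      exact Finset.sum_nonneg hge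
    · rintro r ⟨X, hX, rfl⟩
      rw [← hKint]
      exact aux_upper P ℱ n T u u' u'' hu hu'' _ X hX
  rw [Metric.tendsto_atTop']
  intro ε hε
  obtain ⟨N, hN⟩ := eventually_atTop.1 (hup (ε / 2) (by linarith))
  refine ⟨N, fun n hn => ?_⟩
  have hmem := hN n (le_of_lt hn)
  have hn1 : 1 ≤ n := by have := hn; omega
  have h1 : H0 P ℱ u n T Z ≤ e + ε / 2 := csInf_le ⟨e, hlow n hn1⟩ hmem
  have h2 : e ≤ H0 P ℱ u n T Z := le_csInf ⟨_, hmem⟩ (hlow n hn1)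
  rw [Real.dist_eq, abs_lt]
  constructor <;> linarith
end

section
/- Fix s and suppose that for each i = 1,2,… the function u_{i,s} is C^2 with u_{i,s}'' nondecreasing, and that Σ_{i=1}^∞ ∫_0^δ (δ−λ)/u_{i,s}''(I_{i,s}(1+λ)) dλ = −∞ for every δ > 0, where I_{i,s} is the inverse of u_{i,s}'. Then the sup-convolutions u_s^{(n)}(x) = sup{ Σ_{i=1}^n u_{i,s}(x_i) : Σ_{i=1}^n x_i = x } satisfy lim_{n→∞} u_s^{(n)}(x) = x for every x ∈ ℝ. -/
open Filter

/-- The sup-convolution `u^{(n)}(x) = sup { Σ_{i=1}^n u_i(x_i) : Σ_{i=1}^n x_i = x }`. -/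
noncomputable def supConv (u : ℕ → ℝ → ℝ) (n : ℕ) (x : ℝ) : ℝ :=
  sSup {y | ∃ xs : ℕ → ℝ, (∑ i ∈ Finset.Icc 1 n, xs i) = x ∧
    y = ∑ i ∈ Finset.Icc 1 n, u i (xs i)}

lemma IsUtility.tangent {u u' : ℝ → ℝ} (h : IsUtility u u') (x y : ℝ) :
    u y ≤ u x + u' x * (y - x) := by
  rcases lt_trichotomy x y with hxy | rfl | hxy
  · have := h.strictConcave.concaveOn.slope_le_of_hasDerivAt (Set.mem_univ x) (Set.mem_univ y)
      hxy (h.hasDeriv x)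
    rw [slope_def_field, div_le_iff₀ (by linarith)] at this
    linarith
  · simp
  · have := h.strictConcave.concaveOn.le_slope_of_hasDerivAt (Set.mem_univ y) (Set.mem_univ x)
      hxy (h.hasDeriv x)
    rw [slope_def_field, le_div_iff₀ (by linarith)] at this
    linarith

lemma IsUtility.anti {u u' : ℝ → ℝ} (h : IsUtility u u') : Antitone u' := by
  intro x y hxy
  rcases hxy.eq_or_lt with rfl | hlt
  · exact le_rfl
  have h1 := h.tangent x y
  have h2 := h.tangent y x
  by_contra! hc
  nlinarith

lemma key {u u' u'' : ℝ → ℝ} (h : IsUtility u u')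
    (hd : ∀ x, HasDerivAt u' (u'' x) x) (hmono : Monotone u'')
    (I : ℝ → ℝ) (hI : ∀ x : ℝ, I (u' x) = x) (δ : ℝ) (hδ : 0 < δ) :
    ∃ z : ℝ, 0 ≤ z ∧ z - δ * z ≤ u z ∧ -z - δ * z ≤ u (-z) ∧
      -(δ * z) ≤ ∫ l in (0:ℝ)..δ, (δ - l) / u'' (I (1 + l)) := by
  have hinj : Function.Injective u' := fun a b hab => by rw [← hI a, ← hI b, hab]
  obtain ⟨a, ha⟩ := (h.deriv_bot.eventually (eventually_ge_atTop (1 + δ))).exists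
  have ha0 : a ≤ 0 := by
    by_contra! hc
    have := h.anti hc.le
    rw [h.deriv_zero] at this
    linarith
  obtain ⟨w, hw, hwz⟩ : ∃ w ∈ Set.Icc a 0, u' w = 1 + δ :=
    intermediate_value_Icc' ha0 h.derivCont.continuousOn
      ⟨by rw [h.deriv_zero]; linarith, ha⟩
  have hw0 : w ≤ 0 := hw.2
  refine ⟨-w, by linarith, ?_, ?_, ?_⟩
  · have hm : MonotoneOn (fun z => u' z + u' (-z)) (Set.Ici 0) := by
      have hder : ∀ x, HasDerivAt (fun z => u' z + u' (-z)) (u'' x - u'' (-x)) x := by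
        intro x
        have h2 : HasDerivAt (fun z => u' (-z)) (u'' (-x) * (-1)) x :=
          HasDerivAt.comp x (hd (-x)) (hasDerivAt_neg x)
        have h3 := (hd x).add h2
        have e : u'' x + u'' (-x) * (-1) = u'' x - u'' (-x) := by ring
        rw [e] at h3
        exact h3
      apply monotoneOn_of_deriv_nonneg (convex_Ici 0)
      · exact fun x _ => (hder x).continuousAt.continuousWithinAt
      · exact fun x _ => (hder x).differentiableAt.differentiableWithinAt
      · intro x hx
        rw [interior_Ici, Set.mem_Ioi] at hx
        rw [(hder x).deriv]
        have := hmono (show -x ≤ x by linarith)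
        linarith
    have h1 := hm (Set.mem_Ici.2 le_rfl) (Set.mem_Ici.2 (show (0:ℝ) ≤ -w by linarith))
      (show (0:ℝ) ≤ -w by linarith)
    simp only [neg_zero, neg_neg, h.deriv_zero, hwz] at h1
    have h2 := h.tangent (-w) 0
    rw [h.zero] at h2
    nlinarith
  · have h2 := h.tangent w 0
    rw [h.zero, hwz] at h2
    rw [neg_neg]
    linarith
  · have himg : (fun y => u' y - 1) '' Set.Icc w 0 = Set.Icc 0 δ := by
      apply Set.Subset.antisymm
      · rintro _ ⟨y, hy, rfl⟩
        have h1 := h.anti hy.1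
        have h2 := h.anti hy.2
        rw [h.deriv_zero] at h2
        constructor <;> simp only <;> linarith
      · intro l hl
        obtain ⟨y, hy, hyl⟩ := intermediate_value_Icc' hw0 h.derivCont.continuousOn
          (show 1 + l ∈ Set.Icc (u' 0) (u' w) by
            rw [h.deriv_zero, hwz]; constructor <;> linarith [hl.1, hl.2])
        exact ⟨y, hy, by simp only [hyl]; ring⟩
    rw [intervalIntegral.integral_of_le hδ.le, ← MeasureTheory.integral_Icc_eq_integral_Ioc,
      ← himg, MeasureTheory.integral_image_eq_integral_abs_deriv_smul measurableSet_Icc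
        (fun x _ => ((hd x).sub_const 1).hasDerivWithinAt)
        (fun x _ y _ hxy => hinj (by simpa using hxy))]
    by_cases hint : MeasureTheory.IntegrableOn (fun x => |u'' x| •
        ((δ - (u' x - 1)) / u'' (I (1 + (u' x - 1))))) (Set.Icc w 0)
    · have hc : ∫ x in Set.Icc w 0, (-δ) = -(δ * -w) := by
        simp [MeasureTheory.integral_const, hw0]
        ring
      rw [← hc]
      apply MeasureTheory.setIntegral_mono_on (by simp) hint measurableSet_Icc
      intro y hy
      have h1 := h.anti hy.1
      have h2 := h.anti hy.2
      rw [h.deriv_zero] at h2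
      rw [hwz] at h1
      rw [add_sub_cancel, hI, smul_eq_mul]
      rcases lt_trichotomy (u'' y) 0 with hn | hn | hn
      · rw [abs_of_neg hn]
        have : -u'' y * ((δ - (u' y - 1)) / u'' y) = -(δ - (u' y - 1)) := by
          field_simp [hn.ne]
        rw [this]; linarith
      · simp [hn]; linarith
      · rw [abs_of_pos hn, mul_div_cancel₀ _ hn.ne']; linarith
    · have h0 := MeasureTheory.integral_undef hint
      rw [h0]
      nlinarith

lemma scaled {u u' : ℝ → ℝ} (h : IsUtility u u') {δ z : ℝ}
    (h1 : z - δ * z ≤ u z) (h2 : -z - δ * z ≤ u (-z)) {t : ℝ} (ht : |t| ≤ 1) :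
    t * z - δ * (|t| * z) ≤ u (t * z) := by
  have hc : ∀ y, |t| * u y ≤ u (|t| * y) := by
    intro y
    have := h.strictConcave.concaveOn.2 (Set.mem_univ y) (Set.mem_univ 0) (abs_nonneg t)
      (show 0 ≤ 1 - |t| by linarith) (by ring)
    simpa [h.zero] using this
  have ht0 := abs_nonneg t
  rcases abs_choice t with e | e
  · have := hc z
    have h3 := mul_le_mul_of_nonneg_left h1 ht0
    have e2 : u (|t| * z) = u (t * z) := by rw [e]
    have e3 : |t| * z = t * z := by rw [e]
    linarith
  · have := hc (-z)
    have h3 := mul_le_mul_of_nonneg_left h2 ht0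
    have e3 : |t| * (-z) = t * z := by rw [e]; ring
    rw [e3] at this
    linarith

/-- Lemma 3.5: under the divergence condition on the second derivatives,
the sup-convolutions converge pointwise to the identity: `u^{(n)}(x) → x`. -/
theorem supConv_tendsto_id
    (u u' u'' : ℕ → ℝ → ℝ)
    (hu : ∀ i, IsUtility (u i) (u' i))
    -- `C²` with nondecreasing second derivative:
    (hu'' : ∀ i, (∀ x, HasDerivAt (u' i) (u'' i x) x) ∧
      Continuous (u'' i) ∧ Monotone (u'' i))
    -- `I i` is the inverse function of `u' i`:
    (I : ℕ → ℝ → ℝ) (hI : ∀ i, ∀ x : ℝ, I i (u' i x) = x)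
    -- the divergence condition (3.1):
    (hdiv : ∀ δ : ℝ, 0 < δ →
      Tendsto (fun n => ∑ i ∈ Finset.Icc 1 n,
          ∫ l in (0:ℝ)..δ, (δ - l) / u'' i (I i (1 + l)))
        atTop atBot) :
    ∀ x : ℝ, Tendsto (fun n => supConv u n x) atTop (nhds x) := by
  intro x
  rw [Metric.tendsto_atTop']
  intro ε hε
  set δ : ℝ := ε / (|x| + 1) with hδdef
  have hx1 : 0 < |x| + 1 := by positivity
  have hδ : 0 < δ := by positivity
  have hδx : δ * |x| < ε := by
    have : δ * (|x| + 1) = ε := by rw [hδdef]; field_simp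
    linarith
  choose z hz0 hz1 hz2 hz3 using fun i =>
    key (hu i) (hu'' i).1 (hu'' i).2.2 (I i) (hI i) δ hδ
  have hev := (hdiv δ hδ).eventually (eventually_le_atBot (-(δ * (|x| + 1))))
  obtain ⟨N, hN⟩ := eventually_atTop.1 hev
  refine ⟨N, fun n hn => ?_⟩
  have hS : |x| + 1 ≤ ∑ i ∈ Finset.Icc 1 n, z i := by
    have h1 := hN n hn.le
    have h2 := Finset.sum_le_sum (s := Finset.Icc 1 n) (fun i _ => hz3 i)
    rw [Finset.sum_neg_distrib, ← Finset.mul_sum] at h2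
    have h3 : δ * (|x| + 1) ≤ δ * ∑ i ∈ Finset.Icc 1 n, z i := by linarith
    exact le_of_mul_le_mul_left h3 hδ
  set S := ∑ i ∈ Finset.Icc 1 n, z i with hSdef
  have hSpos : 0 < S := by linarith
  have hsum : ∑ i ∈ Finset.Icc 1 n, (x / S) * z i = x := by
    rw [← Finset.mul_sum, ← hSdef]; field_simp
  have hub : ∀ y ∈ {y | ∃ xs : ℕ → ℝ, (∑ i ∈ Finset.Icc 1 n, xs i) = x ∧
      y = ∑ i ∈ Finset.Icc 1 n, u i (xs i)}, y ≤ x := by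
    rintro y ⟨xs, hxs, rfl⟩
    rw [← hxs]
    apply Finset.sum_le_sum
    intro i _
    have := (hu i).tangent 0 (xs i)
    rw [(hu i).zero, (hu i).deriv_zero] at this
    linarith
  have hmem : ∑ i ∈ Finset.Icc 1 n, u i ((x / S) * z i) ∈
      {y | ∃ xs : ℕ → ℝ, (∑ i ∈ Finset.Icc 1 n, xs i) = x ∧
      y = ∑ i ∈ Finset.Icc 1 n, u i (xs i)} := ⟨fun i => (x / S) * z i, hsum, rfl⟩
  have hle : supConv u n x ≤ x := csSup_le ⟨_, hmem⟩ hub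
  have hge : ∑ i ∈ Finset.Icc 1 n, u i ((x / S) * z i) ≤ supConv u n x :=
    le_csSup ⟨x, hub⟩ hmem
  have habs : |x / S| = |x| / S := by rw [abs_div, abs_of_pos hSpos]
  have ht : |x / S| ≤ 1 := by
    rw [habs, div_le_one hSpos]; linarith
  have h5 := Finset.sum_le_sum (s := Finset.Icc 1 n)
    (fun i _ => scaled (hu i) (hz1 i) (hz2 i) ht)
  rw [Finset.sum_sub_distrib, hsum, ← Finset.mul_sum, ← Finset.mul_sum, ← hSdef, habs,
    div_mul_cancel₀ _ hSpos.ne'] at h5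
  rw [Real.dist_eq, abs_lt]
  constructor <;> linarith
end

section
/- Suppose 𝓕_0 is P-trivial, the utilities are exponential, u_{i,s}(x) = (1/α_{i,s})(1 − e^{−α_{i,s}x}) with α_{i,s} > 0, and the double sequence (α_{i,s})_{i≥1, 0≤s≤T} is bounded. Then for every Z ∈ L^∞_T there is a constant C = C(Z) such that for all n, | H_{n,0}(Z) − E[Z] − (1/2) Σ_{t=1}^T β_t^{(n)} E[(ΔZ_t)^2] | ≤ C n^{−2}, where ΔZ_t = E[Z | 𝓕_t] − E[Z | 𝓕_{t−1}] and β_t^{(n)} is defined by 1/β_t^{(n)} = Σ_{s=t}^T Σ_{i=1}^n 1/α_{i,s}. In particular H_{n,0}(Z) = E[Z] + (1/2) Σ_{t=1}^T β_t^{(n)} E[(ΔZ_t)^2] + O(n^{−2}) as n → ∞. -/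
open MeasureTheory Filter

variable {Ω : Type*}

lemma aux_exp_bound (x a : ℝ) (h : |x| ≤ a) :
    |Real.exp x - 1 - x - x ^ 2 / 2| ≤ |x| ^ 3 * Real.exp a := by
  have h1 := Complex.norm_exp_sub_sum_le_norm_mul_exp (x : ℂ) 3
  have h2 : Complex.exp (x : ℂ) - ∑ m ∈ Finset.range 3, (x : ℂ) ^ m / m.factorial
      = ((Real.exp x - 1 - x - x ^ 2 / 2 : ℝ) : ℂ) := by
    simp [Finset.sum_range_succ, Nat.factorial]
    ring
  rw [h2, Complex.norm_real, Complex.norm_real, Real.norm_eq_abs, Real.norm_eq_abs] at h1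
  refine h1.trans ?_
  gcongr

lemma aux_log_bound (w : ℝ) (h : 1 ≤ w) : |Real.log w - (w - 1)| ≤ (w - 1) ^ 2 := by
  have hw : 0 < w := by linarith
  have h1 := Real.log_le_sub_one_of_pos hw
  have h2 := Real.one_sub_inv_le_log_of_pos hw
  have h3 : 1 - w⁻¹ - (w - 1) ≥ -(w - 1) ^ 2 := by
    have : 1 - w⁻¹ - (w - 1) + (w - 1) ^ 2 = (w - 1) ^ 3 / w := by
      field_simp
      ring
    have h4 : 0 ≤ (w - 1) ^ 3 / w := by
      have : 0 ≤ w - 1 := by linarith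
      positivity
    linarith
  rw [abs_le]
  constructor <;> nlinarith [sq_nonneg (w - 1)]

lemma aux_condExp_bdd {m m0 : MeasurableSpace Ω} {P : Measure Ω} {f : Ω → ℝ} {R : ℝ} (_hR : 0 ≤ R)
    (h : ∀ᵐ ω ∂P, |f ω| ≤ R) : ∀ᵐ ω ∂P, |(P[f | m]) ω| ≤ R :=
  ae_bdd_abs_condExp_of_ae_bdd_abs h

/-- the constant of the one step expansion -/
noncomputable def stepC (K B : ℝ) : ℝ :=
  (2 * K) ^ 3 * Real.exp (B * (2 * K)) +
    B * ((2 * K) ^ 2 / 2 + B * ((2 * K) ^ 3 * Real.exp (B * (2 * K)))) ^ 2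

lemma stepC_nonneg {K B : ℝ} (hK : 0 ≤ K) (_hB : 0 ≤ B) : 0 ≤ stepC K B := by
  unfold stepC; positivity

lemma aux_real {a B β e W Q : ℝ} (hB : 0 ≤ B) (hβ : 0 < β) (hβB : β ≤ B)
    (hW : 1 ≤ W) (hQ : |Q| ≤ a ^ 2) (he : 0 ≤ e)
    (h : |W - 1 - β ^ 2 / 2 * Q| ≤ β ^ 3 * e) :
    |β⁻¹ * Real.log W - β / 2 * Q| ≤ (e + B * (a ^ 2 / 2 + B * e) ^ 2) * β ^ 2 := by
  have h1 := aux_log_bound W hW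
  have hy0 : 0 ≤ W - 1 := by linarith
  have hQ' := abs_le.1 hQ
  have h' := abs_le.1 h
  have h1' := abs_le.1 h1
  have hy : W - 1 ≤ β ^ 2 * (a ^ 2 / 2 + B * e) := by
    have e1 : β ^ 2 / 2 * Q ≤ β ^ 2 / 2 * a ^ 2 := by gcongr; exact hQ'.2
    have e2 : β ^ 3 * e ≤ β ^ 2 * (B * e) := by
      have : β * (β ^ 2 * e) ≤ B * (β ^ 2 * e) := by gcongr
      linarith
    linarith
  have hy2 : (W - 1) ^ 2 ≤ β ^ 3 * (B * (a ^ 2 / 2 + B * e) ^ 2) := by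
    calc (W - 1) ^ 2 ≤ (β ^ 2 * (a ^ 2 / 2 + B * e)) ^ 2 := by gcongr
      _ = β * (β ^ 3 * (a ^ 2 / 2 + B * e) ^ 2) := by ring
      _ ≤ B * (β ^ 3 * (a ^ 2 / 2 + B * e) ^ 2) := by gcongr
      _ = _ := by ring
  have e3 : β⁻¹ * Real.log W - β / 2 * Q = β⁻¹ * (Real.log W - β ^ 2 / 2 * Q) := by
    field_simp
  rw [e3, abs_mul, abs_of_pos (inv_pos.2 hβ)]
  have e4 : |Real.log W - β ^ 2 / 2 * Q| ≤ β ^ 3 * (e + B * (a ^ 2 / 2 + B * e) ^ 2) := by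
    rw [abs_le]; constructor <;> linarith
  calc β⁻¹ * |Real.log W - β ^ 2 / 2 * Q|
      ≤ β⁻¹ * (β ^ 3 * (e + B * (a ^ 2 / 2 + B * e) ^ 2)) := by gcongr
    _ = _ := by field_simp

lemma one_step {m m0 : MeasurableSpace Ω} (hm : m ≤ m0) {P : Measure Ω} [IsProbabilityMeasure P]
    {Y : Ω → ℝ} {K B β : ℝ} (hK : 0 ≤ K) (hβ : 0 < β) (hβB : β ≤ B)
    (hY : AEStronglyMeasurable Y P) (hYK : ∀ᵐ ω ∂P, |Y ω| ≤ K) :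
    ∀ᵐ ω ∂P,
      |β⁻¹ * Real.log ((P[fun ω' => Real.exp (β * Y ω') | m]) ω) - (P[Y | m]) ω
        - β / 2 * (P[fun ω' => (Y ω' - (P[Y | m]) ω') ^ 2 | m]) ω| ≤ stepC K B * β ^ 2 ∧
      |β⁻¹ * Real.log ((P[fun ω' => Real.exp (β * Y ω') | m]) ω)| ≤ K ∧
      |(P[fun ω' => (Y ω' - (P[Y | m]) ω') ^ 2 | m]) ω| ≤ (2 * K) ^ 2 := by
  have hB : 0 ≤ B := hβ.le.trans hβB
  set G : Ω → ℝ := P[Y | m] with hG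
  have hGK : ∀ᵐ ω ∂P, |G ω| ≤ K := aux_condExp_bdd hK hYK
  have hGm : StronglyMeasurable[m] G := stronglyMeasurable_condExp
  have hGi : Integrable G P := integrable_condExp
  have hYi : Integrable Y P := Integrable.of_bound hY K hYK
  set D : Ω → ℝ := fun ω => Y ω - G ω with hD
  have hDi : Integrable D P := hYi.sub hGi
  have hDK : ∀ᵐ ω ∂P, |D ω| ≤ 2 * K := by
    filter_upwards [hYK, hGK] with ω h1 h2
    have := abs_sub (Y ω) (G ω)
    simp only [hD]; linarith
  have hD2K : ∀ᵐ ω ∂P, |D ω ^ 2| ≤ (2 * K) ^ 2 := by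
    filter_upwards [hDK] with ω h1
    rw [abs_pow]; gcongr
  have hD2i : Integrable (fun ω => D ω ^ 2) P :=
    Integrable.of_bound (hDi.1.pow 2) _ hD2K
  have hED : P[D | m] =ᵐ[P] 0 := by
    have h1 : P[D | m] =ᵐ[P] P[Y | m] - P[G | m] := condExp_sub hYi hGi m
    have h2 : P[G | m] = G := condExp_of_stronglyMeasurable hm hGm hGi
    filter_upwards [h1] with ω h
    rw [h, h2]; simp [hG]
  set f : Ω → ℝ := fun ω => Real.exp (β * D ω) with hf
  have hbD : ∀ᵐ ω ∂P, |β * D ω| ≤ B * (2 * K) := by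
    filter_upwards [hDK] with ω h1
    rw [abs_mul, abs_of_pos hβ]; gcongr
  have hfi : Integrable f P := by
    refine Integrable.of_bound (Real.continuous_exp.comp_aestronglyMeasurable (hDi.1.const_mul β))
      (Real.exp (B * (2 * K))) ?_
    filter_upwards [hbD] with ω h
    rw [Real.norm_eq_abs, Real.abs_exp]
    exact Real.exp_le_exp.2 ((le_abs_self _).trans h)
  -- lower bound
  have hW : ∀ᵐ ω ∂P, 1 ≤ (P[f | m]) ω := by
    have hi1 : Integrable ((fun _ => (1 : ℝ)) + β • D : Ω → ℝ) P :=
      (integrable_const 1).add (hDi.smul β)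
    have h1 : P[((fun _ => (1 : ℝ)) + β • D : Ω → ℝ) | m] ≤ᵐ[P] P[f | m] := by
      refine condExp_mono hi1 hfi (Eventually.of_forall fun ω => ?_)
      have := Real.add_one_le_exp (β * D ω)
      simp only [hf, Pi.add_apply, Pi.smul_apply, smul_eq_mul]; linarith
    have h2 := condExp_add (m := m) (integrable_const (μ := P) (1 : ℝ)) (hDi.smul β)
    have h3 := condExp_smul (μ := P) β D m
    filter_upwards [h1, h2, h3, hED] with ω h1 h2 h3 h4
    rw [h2] at h1
    simp only [Pi.add_apply, h3, Pi.smul_apply, h4, condExp_const hm] at h1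
    simpa using h1
  set e : ℝ := (2 * K) ^ 3 * Real.exp (B * (2 * K)) with he
  have he0 : 0 ≤ e := by positivity
  -- Taylor
  have hT : ∀ᵐ ω ∂P, |(P[f | m]) ω - 1 - β ^ 2 / 2 * (P[fun ω' => D ω' ^ 2 | m]) ω|
      ≤ β ^ 3 * e := by
    set p : Ω → ℝ := (fun _ => (1 : ℝ)) + β • D + (β ^ 2 / 2) • (fun ω => D ω ^ 2) with hp
    have hi1 : Integrable ((fun _ => (1 : ℝ)) + β • D : Ω → ℝ) P :=
      (integrable_const 1).add (hDi.smul β)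
    have hi2 : Integrable p P := hi1.add (hD2i.smul _)
    have hr : ∀ᵐ ω ∂P, |(f - p) ω| ≤ β ^ 3 * e := by
      filter_upwards [hbD, hDK] with ω h1 h2
      have h3 := aux_exp_bound _ _ h1
      have h4 : (f - p) ω = Real.exp (β * D ω) - 1 - β * D ω - (β * D ω) ^ 2 / 2 := by
        simp only [hf, hp, Pi.add_apply, Pi.sub_apply, Pi.smul_apply, smul_eq_mul]; ring
      rw [h4]
      refine h3.trans ?_
      rw [abs_mul, abs_of_pos hβ, mul_pow, he, mul_assoc]
      gcongr
    have h0 := aux_condExp_bdd (m := m) (by positivity) hr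
    have h1 := condExp_sub hfi hi2 m
    have h2 := condExp_add hi1 (hD2i.smul (β ^ 2 / 2)) m
    have h3 := condExp_add (m := m) (integrable_const (μ := P) (1 : ℝ)) (hDi.smul β)
    have h4 := condExp_smul (μ := P) β D m
    have h5 := condExp_smul (μ := P) (β ^ 2 / 2) (fun ω => D ω ^ 2) m
    filter_upwards [h0, h1, h2, h3, h4, h5, hED] with ω h0 h1 h2 h3 h4 h5 h6
    rw [h1, Pi.sub_apply, h2, Pi.add_apply, h3, Pi.add_apply, h4, h5, condExp_const hm] at h0
    simp only [Pi.smul_apply, h6, smul_eq_mul, Pi.zero_apply, mul_zero, add_zero] at h0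
    convert h0 using 2
    ring
  -- pull out
  have hEG : AEStronglyMeasurable (fun ω => Real.exp (β * G ω)) P :=
    Real.continuous_exp.comp_aestronglyMeasurable (hGi.1.const_mul β)
  have hbY : ∀ᵐ ω ∂P, |β * Y ω| ≤ β * K := by
    filter_upwards [hYK] with ω h1
    rw [abs_mul, abs_of_pos hβ]; gcongr
  have hEYi : Integrable (fun ω => Real.exp (β * Y ω)) P := by
    refine Integrable.of_bound (Real.continuous_exp.comp_aestronglyMeasurable (hY.const_mul β))
      (Real.exp (β * K)) ?_
    filter_upwards [hbY] with ω h
    rw [Real.norm_eq_abs, Real.abs_exp]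
    exact Real.exp_le_exp.2 ((le_abs_self _).trans h)
  have hfac : (fun ω => Real.exp (β * Y ω)) = (fun ω => Real.exp (β * G ω)) * f := by
    funext ω
    simp only [hf, hD, Pi.mul_apply, ← Real.exp_add]
    congr 1; ring
  have hpull : P[fun ω => Real.exp (β * Y ω) | m]
      =ᵐ[P] (fun ω => Real.exp (β * G ω)) * P[f | m] := by
    rw [hfac]
    refine condExp_mul_of_stronglyMeasurable_left
      (Real.continuous_exp.comp_stronglyMeasurable (hGm.const_mul β)) ?_ hfi
    rw [← hfac]; exact hEYi
  have hlo : (fun _ => Real.exp (-(β * K))) ≤ᵐ[P] P[fun ω => Real.exp (β * Y ω) | m] := by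
    have h1 := condExp_mono (m := m) (integrable_const (μ := P) (Real.exp (-(β * K)))) hEYi
      (by filter_upwards [hbY] with ω h; exact Real.exp_le_exp.2 (abs_le.1 h).1)
    rwa [condExp_const hm] at h1
  have hhi : P[fun ω => Real.exp (β * Y ω) | m] ≤ᵐ[P] (fun _ => Real.exp (β * K)) := by
    have h1 := condExp_mono (m := m) hEYi (integrable_const (μ := P) (Real.exp (β * K))) 
      (by filter_upwards [hbY] with ω h; exact Real.exp_le_exp.2 (abs_le.1 h).2)
    rwa [condExp_const hm] at h1
  have hQ := aux_condExp_bdd (m := m) (by positivity) hD2K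
  filter_upwards [hW, hT, hpull, hlo, hhi, hQ] with ω h1 h2 h3 h4 h5 h6
  refine ⟨?_, ?_, h6⟩
  · have h7 := aux_real hB hβ hβB h1 h6 he0 h2
    rw [h3, Pi.mul_apply, Real.log_mul (Real.exp_pos _).ne' (by linarith), Real.log_exp]
    have h8 : β⁻¹ * (β * G ω + Real.log ((P[f | m]) ω)) - G ω
        = β⁻¹ * Real.log ((P[f | m]) ω) := by field_simp; ring
    rw [h8]
    exact h7
  · have hpos : 0 < (P[fun ω => Real.exp (β * Y ω) | m]) ω := (Real.exp_pos _).trans_le h4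
    have h7 := (Real.le_log_iff_exp_le hpos).2 h4
    have h8 := (Real.log_le_iff_le_exp hpos).2 h5
    have h9 : |Real.log ((P[fun ω => Real.exp (β * Y ω) | m]) ω)| ≤ β * K := abs_le.2 ⟨h7, h8⟩
    rw [abs_mul, abs_of_pos (inv_pos.2 hβ)]
    calc _ ≤ β⁻¹ * (β * K) := by gcongr
      _ = K := by field_simp

lemma trivial_const {m m0 : MeasurableSpace Ω} (hm : m ≤ m0) {P : Measure Ω}
    [IsProbabilityMeasure P] (h0 : ∀ A : Set Ω, MeasurableSet[m] A → P A = 0 ∨ P A = 1)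
    {f : Ω → ℝ} (hf : StronglyMeasurable[m] f) (hfi : Integrable f P) :
    f =ᵐ[P] fun _ => ∫ ω, f ω ∂P := by
  have hind : ProbabilityTheory.Indep m m P := by
    rw [ProbabilityTheory.Indep_iff]
    intro A C hA hC
    rcases h0 A hA with h | h
    · rw [h, zero_mul]; exact measure_mono_null Set.inter_subset_left h
    · rw [h, one_mul, Set.inter_comm]
      refine measure_inter_conull ?_
      exact (prob_compl_eq_zero_iff (hm _ hA)).2 h
  have h1 := condExp_indep_eq hm hm hf hind
  rwa [condExp_of_stronglyMeasurable hm hf hfi] at h1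

/-- the constant of the first order bound -/
noncomputable def firstC (K B : ℝ) : ℝ := (2 * K) ^ 2 / 2 + stepC K B * B

lemma firstC_nonneg {K B : ℝ} (hK : 0 ≤ K) (hB : 0 ≤ B) : 0 ≤ firstC K B := by
  have := stepC_nonneg hK hB
  unfold firstC; positivity

lemma first_order {m0 : MeasurableSpace Ω} {P : Measure Ω} [IsProbabilityMeasure P]
    (ℱ : Filtration ℕ m0) (T : ℕ) {K B b : ℝ} (hK : 0 ≤ K) (hbB : b ≤ B)
    (β : ℕ → ℝ) (hβ : ∀ t ≤ T, 0 < β t) (hβb : ∀ t ≤ T, β t ≤ b)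
    {Z : Ω → ℝ} (hZm : Measurable[ℱ T] Z) (hZK : ∀ ω, |Z ω| ≤ K) (h : ℕ → Ω → ℝ)
    (hT : h T =ᵐ[P] Z)
    (hrec : ∀ t < T, h t =ᵐ[P] fun ω => (β (t + 1))⁻¹ *
        Real.log ((P[fun ω' => Real.exp (β (t + 1) * h (t + 1) ω') | ℱ t]) ω)) (k : ℕ) :
    ∀ t, t + k = T → AEStronglyMeasurable (h t) P ∧ (∀ᵐ ω ∂P, |h t ω| ≤ K) ∧
      ∀ᵐ ω ∂P, |h t ω - (P[Z | ℱ t]) ω| ≤ k * (firstC K B * b) := by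
  have hZi : Integrable Z P := Integrable.of_bound
    (hZm.mono (ℱ.le T) le_rfl).aestronglyMeasurable K (Eventually.of_forall hZK)
  induction k with
  | zero =>
    intro t ht
    obtain rfl : t = T := by omega
    refine ⟨(hZi.1).congr hT.symm, ?_, ?_⟩
    · filter_upwards [hT] with ω h1
      rw [h1]; exact hZK ω
    · rw [condExp_of_stronglyMeasurable (ℱ.le t) hZm.stronglyMeasurable hZi]
      filter_upwards [hT] with ω h1
      simp [h1]
  | succ k ih =>
    intro t ht
    obtain ⟨i1, i2, i3⟩ := ih (t + 1) (by omega)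
    have hb1 := hβ (t + 1) (by omega)
    have hb2 := hβb (t + 1) (by omega)
    have hb0 : 0 ≤ b := hb1.le.trans hb2
    have hB0 : 0 ≤ B := hb0.trans hbB
    have hs := one_step (ℱ.le t) hK hb1 (hb2.trans hbB) i1 i2
    have hr := hrec t (by omega)
    have hc := firstC_nonneg hK hB0
    have hsc := stepC_nonneg hK hB0
    refine ⟨?_, ?_, ?_⟩
    · refine AEStronglyMeasurable.congr ?_ hr.symm
      have : Measurable (P[fun ω' => Real.exp (β (t + 1) * h (t + 1) ω') | ℱ t]) :=
        (stronglyMeasurable_condExp.measurable).mono (ℱ.le t) le_rfl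
      exact (this.log.const_mul _).aestronglyMeasurable
    · filter_upwards [hs, hr] with ω h1 h2
      rw [h2]; exact h1.2.1
    · have hYi : Integrable (h (t + 1)) P := Integrable.of_bound i1 K i2
      have e1 := condExp_sub hYi (integrable_condExp (f := Z) (m := ℱ (t + 1)) (μ := P)) (ℱ t)
      have e2 := condExp_condExp_of_le (μ := P) (f := Z) (ℱ.mono (Nat.le_succ t)) (ℱ.le (t + 1))
      have e3 := aux_condExp_bdd (m := ℱ t) (f := h (t + 1) - P[Z | ℱ (t + 1)])
        (by positivity) i3
      filter_upwards [hs, hr, e1, e2, e3] with ω h1 h2 h3 h4 h5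
      rw [h3, Pi.sub_apply, h4] at h5
      rw [h2]
      obtain ⟨j1, -, j3⟩ := h1
      have j1 := abs_le.1 j1
      have j3 := abs_le.1 j3
      have j5 := abs_le.1 h5
      set Q := (P[fun ω' => (h (t + 1) ω' - (P[h (t + 1) | ℱ t]) ω') ^ 2 | ℱ t]) ω
      have k1 : |β (t + 1) / 2 * Q| ≤ b / 2 * (2 * K) ^ 2 := by
        rw [abs_mul, abs_of_pos (by positivity)]
        gcongr
      have k1 := abs_le.1 k1
      have k2 : stepC K B * β (t + 1) ^ 2 ≤ stepC K B * (B * b) := by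
        gcongr
        rw [sq]
        gcongr
        exact hb2.trans hbB
      have k3 : ((k + 1 : ℕ) : ℝ) * (firstC K B * b)
          = k * (firstC K B * b) + b / 2 * (2 * K) ^ 2 + stepC K B * (B * b) := by
        rw [show firstC K B * b = b / 2 * (2 * K) ^ 2 + stepC K B * (B * b) by
          unfold firstC; ring]
        push_cast; ring
      rw [k3, abs_le]
      constructor <;> linarith

lemma second_order {m0 : MeasurableSpace Ω} {P : Measure Ω} [IsProbabilityMeasure P]
    (ℱ : Filtration ℕ m0) (T : ℕ) {K B b : ℝ} (hK : 0 ≤ K) (hbB : b ≤ B)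
    (β : ℕ → ℝ) (hβ : ∀ t ≤ T, 0 < β t) (hβb : ∀ t ≤ T, β t ≤ b)
    {Z : Ω → ℝ} (hZm : Measurable[ℱ T] Z) (hZK : ∀ ω, |Z ω| ≤ K) (h : ℕ → Ω → ℝ)
    (hT : h T =ᵐ[P] Z)
    (hrec : ∀ t < T, h t =ᵐ[P] fun ω => (β (t + 1))⁻¹ *
        Real.log ((P[fun ω' => Real.exp (β (t + 1) * h (t + 1) ω') | ℱ t]) ω)) (t : ℕ)
    (ht : t < T) :
    |∫ ω, h t ω ∂P - ∫ ω, h (t + 1) ω ∂P - β (t + 1) / 2 *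
      ∫ ω, ((P[Z | ℱ (t + 1)]) ω - (P[Z | ℱ t]) ω) ^ 2 ∂P| ≤
      (stepC K B + 4 * K * (T * firstC K B)) * b ^ 2 := by
  have hf := fun t (ht : t ≤ T) =>
    first_order ℱ T hK hbB β hβ hβb hZm hZK h hT hrec (T - t) t (by omega)
  obtain ⟨i1, i2, i3⟩ := hf (t + 1) (by omega)
  obtain ⟨l1, l2, -⟩ := hf t (by omega)
  have hb1 := hβ (t + 1) (by omega)
  have hb2 := hβb (t + 1) (by omega)
  have hb0 : 0 ≤ b := hb1.le.trans hb2
  have hB0 : 0 ≤ B := hb0.trans hbB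
  have hc := firstC_nonneg hK hB0
  have hsc := stepC_nonneg hK hB0
  have hs := one_step (ℱ.le t) hK hb1 (hb2.trans hbB) i1 i2
  have hr := hrec t ht
  have hYi : Integrable (h (t + 1)) P := Integrable.of_bound i1 K i2
  have hLi : Integrable (h t) P := Integrable.of_bound l1 K l2
  set Y := h (t + 1) with hYdef
  set G : Ω → ℝ := P[Y | ℱ t] with hG
  set M1 : Ω → ℝ := P[Z | ℱ (t + 1)] with hM1
  set M0 : Ω → ℝ := P[Z | ℱ t] with hM0
  have hGi : Integrable G P := integrable_condExp
  have hM1i : Integrable M1 P := integrable_condExp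
  have hM0i : Integrable M0 P := integrable_condExp
  have hGK : ∀ᵐ ω ∂P, |G ω| ≤ K := aux_condExp_bdd hK i2
  have hM1K : ∀ᵐ ω ∂P, |M1 ω| ≤ K := aux_condExp_bdd hK (Eventually.of_forall hZK)
  have hM0K : ∀ᵐ ω ∂P, |M0 ω| ≤ K := aux_condExp_bdd hK (Eventually.of_forall hZK)
  set c : ℝ := T * (firstC K B * b) with hcdef
  have hc0 : 0 ≤ c := by positivity
  have hYM : ∀ᵐ ω ∂P, |(Y - M1) ω| ≤ c := by
    filter_upwards [i3] with ω h1
    refine h1.trans ?_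
    rw [hcdef]
    gcongr
    exact Nat.sub_le _ _
  have hGM : ∀ᵐ ω ∂P, |G ω - M0 ω| ≤ c := by
    have e1 := condExp_sub hYi hM1i (ℱ t)
    have e2 := condExp_condExp_of_le (μ := P) (f := Z) (ℱ.mono (Nat.le_succ t)) (ℱ.le (t + 1))
    have e3 := aux_condExp_bdd (m := ℱ t) hc0 hYM
    filter_upwards [e1, e2, e3] with ω h3 h4 h5
    rw [h3, Pi.sub_apply, h4] at h5
    exact h5
  have hYG2 : Integrable (fun ω => (Y ω - G ω) ^ 2) P := by
    refine Integrable.of_bound ((hYi.sub hGi).1.pow 2) ((2 * K) ^ 2) ?_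
    filter_upwards [i2, hGK] with ω h1 h2
    simp only [Pi.sub_apply, Pi.pow_apply, Real.norm_eq_abs, abs_pow]
    gcongr
    have := abs_sub (Y ω) (G ω)
    linarith
  have hMM2 : Integrable (fun ω => (M1 ω - M0 ω) ^ 2) P := by
    refine Integrable.of_bound ((hM1i.sub hM0i).1.pow 2) ((2 * K) ^ 2) ?_
    filter_upwards [hM1K, hM0K] with ω h1 h2
    simp only [Pi.sub_apply, Pi.pow_apply, Real.norm_eq_abs, abs_pow]
    gcongr
    have := abs_sub (M1 ω) (M0 ω)
    linarith
  set Q : Ω → ℝ := P[fun ω' => (Y ω' - G ω') ^ 2 | ℱ t] with hQ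
  have hQi : Integrable Q P := integrable_condExp
  have hIQ : ∫ ω, Q ω ∂P = ∫ ω, (Y ω - G ω) ^ 2 ∂P := integral_condExp (ℱ.le t)
  have hIG : ∫ ω, G ω ∂P = ∫ ω, Y ω ∂P := integral_condExp (ℱ.le t)
  have key1 : |∫ ω, h t ω ∂P - ∫ ω, Y ω ∂P - β (t + 1) / 2 * ∫ ω, (Y ω - G ω) ^ 2 ∂P|
      ≤ stepC K B * b ^ 2 := by
    rw [← hIQ, ← hIG, ← integral_const_mul, ← integral_sub hLi hGi,
      ← integral_sub (f := fun ω => h t ω - G ω) (hLi.sub hGi) (hQi.const_mul _)]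
    have := norm_integral_le_of_norm_le_const (μ := P) (C := stepC K B * b ^ 2)
      (f := fun ω => h t ω - G ω - β (t + 1) / 2 * Q ω) (by
        filter_upwards [hs, hr] with ω h1 h2
        rw [Real.norm_eq_abs, h2]
        refine h1.1.trans ?_
        gcongr)
    simpa using this
  have key2 : |∫ ω, (Y ω - G ω) ^ 2 ∂P - ∫ ω, (M1 ω - M0 ω) ^ 2 ∂P| ≤ 8 * K * c := by
    rw [← integral_sub hYG2 hMM2]
    have := norm_integral_le_of_norm_le_const (μ := P) (C := 8 * K * c)
      (f := fun ω => (Y ω - G ω) ^ 2 - (M1 ω - M0 ω) ^ 2) (by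
        filter_upwards [hYM, hGM, i2, hGK, hM1K, hM0K] with ω h1 h2 h3 h4 h5 h6
        rw [Real.norm_eq_abs, sq_sub_sq, abs_mul]
        have e1 : |Y ω - G ω + (M1 ω - M0 ω)| ≤ 4 * K := by
          rw [abs_le] at *
          constructor <;> linarith
        have e2 : |Y ω - G ω - (M1 ω - M0 ω)| ≤ 2 * c := by
          simp only [Pi.sub_apply] at h1
          rw [abs_le] at *
          constructor <;> linarith
        calc _ ≤ (4 * K) * (2 * c) := by gcongr
          _ = _ := by ring)
    simpa using this
  have key3 : |β (t + 1) / 2 * (∫ ω, (Y ω - G ω) ^ 2 ∂P - ∫ ω, (M1 ω - M0 ω) ^ 2 ∂P)|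
      ≤ b / 2 * (8 * K * c) := by
    rw [abs_mul, abs_of_pos (by positivity)]
    gcongr
  have e : (stepC K B + 4 * K * (T * firstC K B)) * b ^ 2
      = stepC K B * b ^ 2 + b / 2 * (8 * K * c) := by rw [hcdef]; ring
  rw [e]
  rw [abs_le] at *
  constructor <;> linarith

/-- Theorem 3.6: in the exponential case with bounded risk aversions,
`H_{n,0}(Z) = E[Z] + (1/2) Σ_{t=1}^T β_t^{(n)} E[(ΔZ_t)²] + O(n⁻²)` as `n → ∞`. -/
theorem exponential_premium_variance_expansion
    {m0 : MeasurableSpace Ω} (P : Measure Ω) [IsProbabilityMeasure P]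
    (ℱ : Filtration ℕ m0) (T : ℕ) (hT : 0 < T)
    -- `𝓕_0` is `P`-trivial:
    (hF0 : ∀ A : Set Ω, MeasurableSet[ℱ 0] A → P A = 0 ∨ P A = 1)
    -- exponential risk-aversion parameters, positive and bounded:
    (α : ℕ → ℕ → ℝ) (hα : ∀ i s, 0 < α i s)
    (hbdd : ∃ B : ℝ, ∀ i s, 1 ≤ i → s ≤ T → α i s ≤ B)
    -- modified risk aversion `1/β_t^{(n)} = Σ_{s=t}^T Σ_{i=1}^n 1/α_{i,s}`:
    (β : ℕ → ℕ → ℝ) (hβpos : ∀ n t, 0 < n → t ≤ T → 0 < β n t)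
    (hβ : ∀ n t, 0 < n → t ≤ T →
      (β n t)⁻¹ = ∑ s ∈ Finset.Icc t T, ∑ i ∈ Finset.Icc 1 n, (α i s)⁻¹)
    (Z : Ω → ℝ) (hZ : MeasBdd (ℱ T) Z)
    -- `H n` is the indifference-premium process determined by the backward recursion:
    (H : ℕ → ℕ → Ω → ℝ)
    (hHT : ∀ n, 0 < n → H n T =ᵐ[P] Z)
    (hHrec : ∀ n t, 0 < n → t < T → H n t =ᵐ[P] fun ω =>
      (β n (t + 1))⁻¹ *
        Real.log ((P[fun ω' => Real.exp (β n (t + 1) * H n (t + 1) ω') | ℱ t]) ω)) :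
    -- the expansion with uniform `O(n⁻²)` error:
    ∃ C : ℝ, ∀ n : ℕ, 0 < n → ∀ᵐ ω ∂P,
      |H n 0 ω - (∫ ω', Z ω' ∂P) -
        (1 / 2) * ∑ t ∈ Finset.Icc 1 T, β n t *
          (∫ ω', ((P[Z | ℱ t]) ω' - (P[Z | ℱ (t - 1)]) ω') ^ 2 ∂P)|
        ≤ C / (n : ℝ) ^ 2 := by
  obtain ⟨hZm, K, hZK⟩ := hZ
  obtain ⟨B, hB⟩ := hbdd
  have hB0 : 0 < B := (hα 1 0).trans_le (hB 1 0 le_rfl (Nat.zero_le _))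
  obtain ⟨ω0⟩ : Nonempty Ω := nonempty_of_isProbabilityMeasure P
  have hK : 0 ≤ K := (abs_nonneg _).trans (hZK ω0)
  refine ⟨T * ((stepC K B + 4 * K * (T * firstC K B)) * B ^ 2), fun n hn => ?_⟩
  have hn' : (1 : ℝ) ≤ n := by exact_mod_cast hn
  have hn0 : (0 : ℝ) < n := by linarith
  have hbB : B / n ≤ B := div_le_self hB0.le hn'
  have hβ0 : ∀ t ≤ T, 0 < β n t := fun t ht => hβpos n t hn ht
  have hβb : ∀ t ≤ T, β n t ≤ B / n := by
    intro t ht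
    have h1 : (n : ℝ) / B ≤ (β n t)⁻¹ := by
      rw [hβ n t hn ht]
      calc (n : ℝ) / B = ∑ i ∈ Finset.Icc 1 n, B⁻¹ := by simp [div_eq_mul_inv]
        _ ≤ ∑ i ∈ Finset.Icc 1 n, (α i T)⁻¹ := by
          refine Finset.sum_le_sum fun i hi => ?_
          exact inv_anti₀ (hα i T) (hB i T (Finset.mem_Icc.1 hi).1 le_rfl)
        _ ≤ _ := by
          refine Finset.single_le_sum (f := fun s => ∑ i ∈ Finset.Icc 1 n, (α i s)⁻¹)
            (fun s _ => Finset.sum_nonneg fun i _ => (inv_pos.2 (hα i s)).le)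
            (Finset.mem_Icc.2 ⟨ht, le_rfl⟩)
    have h2 := inv_anti₀ (by positivity) h1
    rwa [inv_inv, inv_div] at h2
  have hrec := fun t ht => hHrec n t hn ht
  have hso := second_order ℱ T hK hbB (β n) hβ0 hβb hZm hZK (H n) (hHT n hn) hrec
  obtain ⟨f1, f2, -⟩ := first_order ℱ T hK hbB (β n) hβ0 hβb hZm hZK (H n) (hHT n hn) hrec T 0
    (by omega)
  have hconst : H n 0 =ᵐ[P] fun _ => ∫ ω, H n 0 ω ∂P := by
    have hr := hrec 0 hT
    have hm : StronglyMeasurable[ℱ 0] (fun ω => (β n (0 + 1))⁻¹ *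
        Real.log ((P[fun ω' => Real.exp (β n (0 + 1) * H n (0 + 1) ω') | ℱ 0]) ω)) := by
      have h1 : Measurable[ℱ 0] (P[fun ω' => Real.exp (β n (0 + 1) * H n (0 + 1) ω') | ℱ 0]) :=
        stronglyMeasurable_condExp.measurable
      exact (h1.log.const_mul _).stronglyMeasurable
    have h2 := trivial_const (ℱ.le 0) hF0 hm ((Integrable.of_bound f1 K f2).congr hr)
    rw [← integral_congr_ae hr] at h2
    exact hr.trans h2
  have hIT : ∫ ω, H n T ω ∂P = ∫ ω, Z ω ∂P := integral_congr_ae (hHT n hn)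
  have htel : ∑ t ∈ Finset.range T, (∫ ω, H n t ω ∂P - ∫ ω, H n (t + 1) ω ∂P)
      = ∫ ω, H n 0 ω ∂P - ∫ ω, H n T ω ∂P :=
    Finset.sum_range_sub' (fun t => ∫ ω, H n t ω ∂P) T
  have hsum : (1 / 2) * ∑ t ∈ Finset.Icc 1 T, β n t *
          (∫ ω', ((P[Z | ℱ t]) ω' - (P[Z | ℱ (t - 1)]) ω') ^ 2 ∂P)
      = ∑ t ∈ Finset.range T, β n (t + 1) / 2 *
          ∫ ω', ((P[Z | ℱ (t + 1)]) ω' - (P[Z | ℱ t]) ω') ^ 2 ∂P := by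
    rw [Finset.mul_sum, Finset.range_eq_Ico, ← Finset.Ico_add_one_right_eq_Icc,
      Finset.sum_Ico_eq_sum_range, Finset.sum_Ico_eq_sum_range]
    simp only [Nat.add_sub_cancel, Nat.sub_zero, zero_add]
    refine Finset.sum_congr rfl fun t _ => ?_
    rw [Nat.add_sub_cancel_left, Nat.add_comm 1 t]
    ring
  filter_upwards [hconst] with ω hω
  rw [hω, hsum, ← hIT, ← htel, ← Finset.sum_sub_distrib]
  refine (Finset.abs_sum_le_sum_abs _ _).trans ?_
  refine (Finset.sum_le_sum fun t ht => hso t (Finset.mem_range.1 ht)).trans (le_of_eq ?_)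
  rw [Finset.sum_const, Finset.card_range, nsmul_eq_mul]
  field_simp
end
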